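/- arXiv:2005.08584 — 4 statements merged into one kernel-verified Lean document; each statement's English description precedes it below -/
import Mathlib

section
/- Fix a finite bipartite graph with men M, women W and edge set E ⊆ M × W, and consider incomplete preference profiles where each agent has a strict total order on their neighborhood. For every partial matching μ ⊆ E, the number of incomplete preference profiles under which μ is stable and women-optimal equals the number of incomplete preference profiles under which μ is stable and men-optimal. (Equivalently, when each agent ranks their neighbors uniformly and independently at random, the output distributions of the women-proposing and men-proposing deferred acceptance procedures are identical.) -/
section

variable {Mn Wn : Type*} [Fintype Mn] [Fintype Wn] [DecidableEq Mn] [DecidableEq Wn]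

/-- An incomplete preference profile on the bipartite graph with edge set `E`: each man `m`
has a strict total order on his neighborhood (encoded as a ranking bijection with
`Fin (#neighbours)`, smaller rank = more preferred), and symmetrically for each woman. -/
def IncProfile (E : Finset (Mn × Wn)) : Type _ :=
  (∀ m : Mn, {w : Wn // (m, w) ∈ E} ≃ Fin (Fintype.card {w : Wn // (m, w) ∈ E})) ×
  (∀ w : Wn, {m : Mn // (m, w) ∈ E} ≃ Fin (Fintype.card {m : Mn // (m, w) ∈ E}))

/-- `w₁ ≻ₘ w₂` for the incomplete profile `p` (both must be neighbours of `m`). -/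
def PrefM {E : Finset (Mn × Wn)} (p : IncProfile E) (m : Mn) (w₁ w₂ : Wn) : Prop :=
  ∃ (h₁ : (m, w₁) ∈ E) (h₂ : (m, w₂) ∈ E), p.1 m ⟨w₁, h₁⟩ < p.1 m ⟨w₂, h₂⟩

/-- `m₁ ≻_w m₂` for the incomplete profile `p`. -/
def PrefW {E : Finset (Mn × Wn)} (p : IncProfile E) (w : Wn) (m₁ m₂ : Mn) : Prop :=
  ∃ (h₁ : (m₁, w) ∈ E) (h₂ : (m₂, w) ∈ E), p.2 w ⟨m₁, h₁⟩ < p.2 w ⟨m₂, h₂⟩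

/-- `ν` is a partial matching: a set of edges of `E`, no two of which share an endpoint. -/
def IsPartialMatching (E ν : Finset (Mn × Wn)) : Prop :=
  ν ⊆ E ∧ ∀ e₁ ∈ ν, ∀ e₂ ∈ ν, (e₁.1 = e₂.1 ∨ e₁.2 = e₂.2) → e₁ = e₂

/-- The pair `(m, w) ∈ E` blocks `ν`: `m` is unmatched or prefers `w` to his partner, and
`w` is unmatched or prefers `m` to her partner. -/
def Blocks (E : Finset (Mn × Wn)) {E' : Finset (Mn × Wn)} (p : IncProfile E')
    (ν : Finset (Mn × Wn)) (m : Mn) (w : Wn) : Prop :=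
  (m, w) ∈ E ∧ (∀ w', (m, w') ∈ ν → PrefM p m w w') ∧ (∀ m', (m', w) ∈ ν → PrefW p w m m')

/-- `ν` is a stable partial matching for the incomplete profile `p`. -/
def IsStable (E : Finset (Mn × Wn)) (p : IncProfile E) (ν : Finset (Mn × Wn)) : Prop :=
  IsPartialMatching E ν ∧ ¬ ∃ m w, Blocks E p ν m w

/-- `ν` is stable and women-optimal: for every stable partial matching `ν'` and every woman
matched in `ν'`, she is matched in `ν` and weakly prefers her `ν`-partner. -/
def IsWomenOptimal (E : Finset (Mn × Wn)) (p : IncProfile E) (ν : Finset (Mn × Wn)) : Prop :=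
  IsStable E p ν ∧ ∀ ν', IsStable E p ν' →
    ∀ m' w, (m', w) ∈ ν' → ∃ m, (m, w) ∈ ν ∧ (m = m' ∨ PrefW p w m m')

/-- `ν` is stable and men-optimal. -/
def IsMenOptimal (E : Finset (Mn × Wn)) (p : IncProfile E) (ν : Finset (Mn × Wn)) : Prop :=
  IsStable E p ν ∧ ∀ ν', IsStable E p ν' →
    ∀ m w', (m, w') ∈ ν' → ∃ w, (m, w) ∈ ν ∧ (w = w' ∨ PrefM p m w w')

/-!
Index the couples of a stable matching as `(x i, y i)`, and call `j` the successor of `i` when `y j`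
is the favourite of the man `x i` among the women who prefer him to their own partner. The matching
fails to be women-optimal exactly when this partial function has a directed cycle. Counting families
of disjoint cycles, that is, permutations `σ` whose nontrivial cycles all follow it, with the sign
`(-1) ^ #cycles` detects this: the signed count is the determinant of `1 - T`, with `T` the
adjacency matrix, which is `0` if there is a cycle and `1` if not.

For a fixed `σ`, transposing `y i` and `y (σ i)` in the list of every moved `x i` is a bijection
from the profiles for which the matching is stable and `σ` follows successors to those for which the
blocking pairs are exactly the pairs `(x i, y (σ i))` with `i` moved. The latter condition is
preserved when the two sides are exchanged and `σ` is inverted, and inversion preserves the number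
of cycles.
-/

section Permutations

variable {I : Type*}

/-- Every point moved by `σ` is sent along an edge of the digraph `R`: the nontrivial cycles of `σ`
form a family of vertex-disjoint directed cycles of `R`. -/
def MovesAlong (R : I → I → Prop) (σ : Equiv.Perm I) : Prop :=
  ∀ i, σ i ≠ i → R i (σ i)

theorem exists_iterate_mem_periodicPts [Finite I] (f : I → I) (i : I) :
    ∃ n, f^[n] i ∈ Function.periodicPts f := by
  obtain ⟨m, n, hne, heq⟩ := Finite.exists_ne_map_eq_of_infinite fun n : ℕ => f^[n] i
  wlog hlt : m < n generalizing m n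
  · exact this n m hne.symm heq.symm (by omega)
  refine ⟨m, Function.mk_mem_periodicPts (Nat.sub_pos_of_lt hlt) ?_⟩
  rw [Function.IsPeriodicPt, Function.IsFixedPt, ← Function.iterate_add_apply,
    Nat.sub_add_cancel hlt.le]
  exact heq.symm

theorem exists_movesAlong_ne_one [Finite I] {R : I → I → Prop} (hirrefl : ∀ i, ¬ R i i)
    {S : Set I} (hne : S.Nonempty) (hS : ∀ i ∈ S, ∃ j ∈ S, R i j) :
    ∃ σ : Equiv.Perm I, σ ≠ 1 ∧ MovesAlong R σ := by
  classical
  have hsucc : ∀ i, ∃ j, if i ∈ S then j ∈ S ∧ R i j else j = i := fun i => by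
    by_cases hi : i ∈ S <;> simp [hi, hS]
  choose f hf using hsucc
  have hfS : ∀ i ∈ S, f i ∈ S ∧ R i (f i) := fun i hi => by simpa [hi] using hf i
  have hfix : ∀ i ∉ S, f i = i := fun i hi => by simpa [hi] using hf i
  let σ : Equiv.Perm I := Equiv.Perm.ofSubtype ((Function.bijOn_periodicPts f).equiv f)
  have hσ : ∀ i ∈ Function.periodicPts f, σ i = f i := fun i hi =>
    Equiv.Perm.ofSubtype_apply_of_mem _ hi
  refine ⟨σ, fun hone => ?_, fun i hi => ?_⟩
  · obtain ⟨i, hi⟩ := hne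
    obtain ⟨n, hper⟩ := exists_iterate_mem_periodicPts f i
    have hR := (hfS _ (Set.MapsTo.iterate (fun i hi => (hfS i hi).1) n hi)).2
    rw [← hσ _ hper, hone] at hR
    exact hirrefl _ hR
  · have hper : i ∈ Function.periodicPts f := by
      by_contra hper
      exact hi (Equiv.Perm.ofSubtype_apply_of_not_mem _ hper)
    rw [hσ i hper] at hi ⊢
    exact (hfS i (by_contra fun h => hi (hfix i h))).2

open Classical in
/-- The matrix `1 - T`, where `T` is the adjacency matrix of the digraph `R` with its loops
removed. -/
noncomputable def oneSubAdj [DecidableEq I] (R : I → I → Prop) : Matrix I I ℤ :=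
  Matrix.of fun i j => if i = j then 1 else if R i j then -1 else 0

variable [Fintype I] [DecidableEq I]

theorem prod_oneSubAdj_of_movesAlong {R : I → I → Prop} {σ : Equiv.Perm I}
    (hσ : MovesAlong R σ) : ∏ i, oneSubAdj R i (σ i) = (-1) ^ σ.support.card := by
  have hentry : ∀ i, oneSubAdj R i (σ i) = if i ∈ σ.support then -1 else 1 := fun i => by
    by_cases hi : σ i = i
    · simp [oneSubAdj, hi]
    · simp [oneSubAdj, hi, Ne.symm hi, hσ i hi]
  rw [Finset.prod_congr rfl fun i _ => hentry i, Finset.prod_ite_mem, Finset.univ_inter,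
    Finset.prod_const]

theorem prod_oneSubAdj_of_not_movesAlong {R : I → I → Prop} {σ : Equiv.Perm I}
    (hσ : ¬ MovesAlong R σ) : ∏ i, oneSubAdj R i (σ i) = 0 := by
  obtain ⟨i, hi, hR⟩ : ∃ i, σ i ≠ i ∧ ¬ R i (σ i) := by simpa [MovesAlong] using hσ
  exact Finset.prod_eq_zero (Finset.mem_univ i) (by simp [oneSubAdj, hi.symm, hR])

open Classical in
theorem det_oneSubAdj (R : I → I → Prop) :
    (oneSubAdj R).det =
      ∑ σ : Equiv.Perm I, if MovesAlong R σ then (-1) ^ σ.cycleType.card else 0 := by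
  rw [← Matrix.det_transpose, Matrix.det_apply']
  refine Finset.sum_congr rfl fun σ _ => ?_
  simp only [Matrix.transpose_apply]
  split_ifs with hσ
  · rw [prod_oneSubAdj_of_movesAlong hσ, Equiv.Perm.sign_of_cycleType, Equiv.Perm.sum_cycleType,
      pow_add]
    push_cast
    rw [mul_right_comm, ← mul_pow]
    simp
  · rw [prod_oneSubAdj_of_not_movesAlong hσ, mul_zero]

/-- The indicator of the support of `σ` is a left null vector. -/
theorem det_oneSubAdj_eq_zero {R : I → I → Prop} (hR : Relator.RightUnique R)
    {σ : Equiv.Perm I} (hne : σ ≠ 1) (hσ : MovesAlong R σ) : (oneSubAdj R).det = 0 := by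
  let v : I → ℤ := fun i => if σ i = i then 0 else 1
  refine Matrix.exists_vecMul_eq_zero_iff.1 ⟨v, fun hv => hne ?_, ?_⟩
  · ext i
    simpa [v] using congrFun hv i
  have hoff : ∀ i j, i ≠ j → σ i ≠ j → v i * oneSubAdj R i j = 0 := fun i j hij hσij => by
    by_cases hi : σ i = i
    · simp [v, hi]
    · have : ¬ R i j := fun h => hσij (hR (hσ i hi) h)
      simp [oneSubAdj, hij, this]
  funext j
  obtain ⟨i, rfl⟩ := σ.surjective j
  change ∑ k, v k * oneSubAdj R k (σ i) = 0
  by_cases hi : σ i = i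
  · rw [hi]
    refine Finset.sum_eq_zero fun k _ => ?_
    by_cases hk : k = i
    · simp [v, hk, hi]
    · exact hoff k i hk fun h => hk (σ.injective (h.trans hi.symm))
  · rw [Finset.sum_eq_add_of_mem (σ i) i (Finset.mem_univ _) (Finset.mem_univ _) hi
      fun k _ hk => hoff k (σ i) hk.1 (σ.injective.ne hk.2)]
    simp [v, oneSubAdj, hi, Ne.symm hi, hσ i hi]

open Classical in
theorem sum_movesAlong_neg_one_pow {R : I → I → Prop} (hR : Relator.RightUnique R) :
    (∑ σ : Equiv.Perm I, if MovesAlong R σ then (-1 : ℤ) ^ σ.cycleType.card else 0) =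
      if ∃ σ : Equiv.Perm I, σ ≠ 1 ∧ MovesAlong R σ then 0 else 1 := by
  split_ifs with h
  · obtain ⟨σ, hne, hσ⟩ := h
    rw [← det_oneSubAdj, det_oneSubAdj_eq_zero hR hne hσ]
  · rw [Finset.sum_eq_single 1 (fun σ _ hne => if_neg fun hσ => h ⟨σ, hne, hσ⟩) (by simp)]
    simp [MovesAlong]

end Permutations

section Rankings

variable {B L : Type*} {N : B → Prop}

/-- `b₁` has a smaller rank than `b₂`, i.e. is preferred to it, in the ranking `r` of the elements
satisfying `N`; elements outside `N` are incomparable to everything. -/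
def Precedes [LT L] (r : {b // N b} ≃ L) (b₁ b₂ : B) : Prop :=
  ∃ (h₁ : N b₁) (h₂ : N b₂), r ⟨b₁, h₁⟩ < r ⟨b₂, h₂⟩

namespace Precedes

variable {r : {b // N b} ≃ L} {b b₁ b₂ b₃ : B}

theorem equiv_trans_iff [LT L] {s : Equiv.Perm B} (hs : ∀ b, N b ↔ N (s b)) :
    Precedes ((s.subtypeEquiv hs).trans r) b₁ b₂ ↔ Precedes r (s b₁) (s b₂) :=
  ⟨fun ⟨h₁, h₂, h⟩ => ⟨(hs b₁).1 h₁, (hs b₂).1 h₂, h⟩,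
    fun ⟨h₁, h₂, h⟩ => ⟨(hs b₁).2 h₁, (hs b₂).2 h₂, h⟩⟩

section Preorder

variable [Preorder L]

theorem irrefl : ¬ Precedes r b b := fun ⟨_, _, h⟩ => lt_irrefl _ h

theorem trans : Precedes r b₁ b₂ → Precedes r b₂ b₃ → Precedes r b₁ b₃ :=
  fun ⟨h₁, _, h⟩ ⟨_, h₃, h'⟩ => ⟨h₁, h₃, h.trans h'⟩

theorem asymm (h : Precedes r b₁ b₂) : ¬ Precedes r b₂ b₁ := fun h' => irrefl (h.trans h')

end Preorder

variable [LinearOrder L]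

theorem of_not (h₁ : N b₁) (h₂ : N b₂) (hne : b₁ ≠ b₂) (h : ¬ Precedes r b₁ b₂) :
    Precedes r b₂ b₁ :=
  ⟨h₂, h₁, (not_lt.1 fun hlt => h ⟨h₁, h₂, hlt⟩).lt_of_ne fun heq =>
    hne (congrArg Subtype.val (r.injective heq)).symm⟩

theorem exists_first [Finite B] {C : B → Prop} (hC : ∀ b, C b → N b) (hne : ∃ b, C b) :
    ∃ d, C d ∧ ∀ b, C b → b = d ∨ Precedes r d b := by
  obtain ⟨b₀, hb₀⟩ := hne
  obtain ⟨d, hd, hmin⟩ := Set.exists_min_image {b : {b // N b} | C b} r (Set.toFinite _)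
    ⟨⟨b₀, hC b₀ hb₀⟩, hb₀⟩
  refine ⟨d, hd, fun b hb => or_iff_not_imp_left.2 fun hbd => ?_⟩
  exact of_not (hC b hb) d.2 hbd fun ⟨h, _, hlt⟩ => (hmin ⟨b, h⟩ hb).not_gt hlt

/-- With `C` the agents that would accept a given agent and `c` its partner, this describes the
transposition in one row of a profile: on the right the row has no blocking pair and `d` is next
after `c`, on the left `d` forms the only blocking pair of the row. -/
theorem unique_precedes_swap_iff [DecidableEq B] {C : B → Prop} (hC : ∀ b, C b → N b) {c d : B}
    (hc : N c) (hd : N d) (hcC : ¬ C c) (hne : c ≠ d) :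
    (∀ b, (C b ∧ Precedes r (Equiv.swap c d b) (Equiv.swap c d c)) ↔ b = d) ↔
      (∀ b, C b → ¬ Precedes r b c) ∧ C d ∧ ∀ b, C b → b = d ∨ Precedes r d b := by
  have hswap : ∀ b, C b → b ≠ d → Equiv.swap c d b = b := fun b hb hbd =>
    Equiv.swap_apply_of_ne_of_ne (fun h => hcC (h ▸ hb)) hbd
  simp only [Equiv.swap_apply_left]
  constructor
  · intro h
    obtain ⟨hdC, hcd⟩ : C d ∧ Precedes r c d := by simpa using (h d).2 rfl
    have hfirst : ∀ b, C b → b = d ∨ Precedes r d b := fun b hb =>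
      or_iff_not_imp_left.2 fun hbd => of_not (hC b hb) hd hbd fun hlt =>
        hbd ((h b).1 ⟨hb, (hswap b hb hbd).symm ▸ hlt⟩)
    refine ⟨fun b hb hbc => ?_, hdC, hfirst⟩
    rcases hfirst b hb with rfl | hdb
    · exact hcd.asymm hbc
    · exact irrefl (hdb.trans (hbc.trans hcd))
  · rintro ⟨hbefore, hdC, hfirst⟩ b
    constructor
    · rintro ⟨hb, hlt⟩
      by_contra hbd
      rw [hswap b hb hbd] at hlt
      exact hlt.asymm ((hfirst b hb).resolve_left hbd)
    · rintro rfl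
      exact ⟨hdC, by simpa using of_not hd hc hne.symm (hbefore b hdC)⟩

end Precedes

end Rankings

/-- The matching whose couples are the pairs `(x i, y i)`. Every matching of a finite graph has this
form, and permutations of the index set `I` then describe its rematchings. -/
def IsCouple {A B I : Type*} (x : I ↪ A) (y : I ↪ B) (a : A) (b : B) : Prop :=
  ∃ i, x i = a ∧ y i = b

section Couples

variable {A B I : Type*} {x : I ↪ A} {y : I ↪ B} {i : I} {a : A} {b : B}

@[simp]
theorem isCouple_left : IsCouple x y (x i) b ↔ y i = b := by
  simp [IsCouple]

@[simp]
theorem isCouple_right : IsCouple x y a (y i) ↔ x i = a := by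
  simp [IsCouple]

theorem isCouple_flip : IsCouple y x = fun b a => IsCouple x y a b := by
  ext b a
  simp only [IsCouple, and_comm]

theorem biUnique_isCouple : Relator.BiUnique (IsCouple x y) :=
  ⟨by rintro _ a _ ⟨i, rfl, rfl⟩ h; exact (isCouple_right.1 h),
    by rintro _ _ b ⟨i, rfl, rfl⟩ h; exact isCouple_left.1 h⟩

theorem exists_isCouple_eq {ν : A → B → Prop} (hν : Relator.BiUnique ν) :
    ∃ (x : {e : A × B // ν e.1 e.2} ↪ A) (y : {e : A × B // ν e.1 e.2} ↪ B), IsCouple x y = ν := by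
  refine ⟨⟨fun e => e.1.1, ?_⟩, ⟨fun e => e.1.2, ?_⟩, ?_⟩
  · rintro ⟨⟨a, b⟩, h⟩ ⟨⟨a', b'⟩, h'⟩ (rfl : a = a')
    obtain rfl := hν.2 h h'
    rfl
  · rintro ⟨⟨a, b⟩, h⟩ ⟨⟨a', b'⟩, h'⟩ (rfl : b = b')
    obtain rfl := hν.1 h h'
    rfl
  · ext a b
    exact ⟨fun ⟨e, ha, hb⟩ => ha ▸ hb ▸ e.2, fun h => ⟨⟨(a, b), h⟩, rfl, rfl⟩⟩

end Couples

/-- A preference profile for a bipartite graph `E` with sides `A` and `B`: each agent ranks its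
neighbours bijectively by the elements of a linear order, smaller meaning preferred. Making `E` a
relation lets the two sides be exchanged without casts. -/
@[ext]
structure PrefProfile {A B : Type*} (E : A → B → Prop) (L : A → Type*) (K : B → Type*) where
  left : ∀ a, {b // E a b} ≃ L a
  right : ∀ b, {a // E a b} ≃ K b

namespace PrefProfile

variable {A B I : Type*} {E : A → B → Prop} {L : A → Type*} {K : B → Type*}

instance [Finite A] [Finite B] : Finite (PrefProfile E L K) :=
  Finite.of_injective (fun p => (p.left, p.right)) fun _ _ h =>
    PrefProfile.ext (congrArg Prod.fst h) (congrArg Prod.snd h)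

/-- The same profile with the two sides of the graph exchanged. -/
def swap (p : PrefProfile E L K) : PrefProfile (fun b a => E a b) K L :=
  ⟨p.right, p.left⟩

/-- Exchanging the two sides is a bijection of profiles. -/
def swapEquiv : PrefProfile E L K ≃ PrefProfile (fun b a => E a b) K L :=
  ⟨swap, swap, fun _ => rfl, fun _ => rfl⟩

variable [∀ b, LinearOrder (K b)] {p : PrefProfile E L K} {μ ν : A → B → Prop} {a a' : A} {b b' : B}

/-- Faced with a proposal of `a` when matched according to `μ`, agent `b` would accept it. -/
def WouldAccept (p : PrefProfile E L K) (μ : A → B → Prop) (b : B) (a : A) : Prop :=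
  E a b ∧ ∀ a', μ a' b → Precedes (p.right b) a a'

theorem WouldAccept.trans (h : p.WouldAccept μ b a) (h' : Precedes (p.right b) a' a) :
    p.WouldAccept μ b a' :=
  ⟨h'.1, fun a'' ha'' => h'.trans (h.2 a'' ha'')⟩

theorem WouldAccept.not_rel (h : p.WouldAccept μ b a) : ¬ μ a b :=
  fun hab => Precedes.irrefl (h.2 a hab)

variable [∀ a, LinearOrder (L a)]

/-- The pair `(a, b)` blocks the matching `μ`. -/
def IsBlocking (p : PrefProfile E L K) (μ : A → B → Prop) (a : A) (b : B) : Prop :=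
  p.WouldAccept μ b a ∧ ∀ b', μ a b' → Precedes (p.left a) b b'

/-- `μ` is a stable partial matching, matchings being encoded as relations. -/
structure IsStable (p : PrefProfile E L K) (μ : A → B → Prop) : Prop where
  le : ∀ a b, μ a b → E a b
  biUnique : Relator.BiUnique μ
  not_isBlocking : ∀ a b, ¬ p.IsBlocking μ a b

/-- `μ` is stable, and every agent on the right does at least as well in `μ` as in any other stable
matching. -/
def IsRightOptimal (p : PrefProfile E L K) (μ : A → B → Prop) : Prop :=
  p.IsStable μ ∧ ∀ ν, p.IsStable ν →
    ∀ a' b, ν a' b → ∃ a, μ a b ∧ (a = a' ∨ Precedes (p.right b) a a')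

/-- `μ` is stable, and every agent on the left does at least as well in `μ` as in any other stable
matching. -/
def IsLeftOptimal (p : PrefProfile E L K) (μ : A → B → Prop) : Prop :=
  p.swap.IsRightOptimal fun b a => μ a b

section Stability

theorem isBlocking_swap : p.swap.IsBlocking (fun b a => μ a b) b a ↔ p.IsBlocking μ a b :=
  ⟨fun ⟨⟨hE, hl⟩, hr⟩ => ⟨⟨hE, hr⟩, hl⟩, fun ⟨⟨hE, hr⟩, hl⟩ => ⟨⟨hE, hl⟩, hr⟩⟩

theorem IsStable.swap (h : p.IsStable μ) : p.swap.IsStable fun b a => μ a b where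
  le b a := h.le a b
  biUnique := ⟨fun _ _ _ h₁ h₂ => h.biUnique.2 h₁ h₂, fun _ _ _ h₁ h₂ => h.biUnique.1 h₁ h₂⟩
  not_isBlocking b a hb := h.not_isBlocking a b (isBlocking_swap.1 hb)

theorem isStable_swap : p.swap.IsStable (fun b a => μ a b) ↔ p.IsStable μ :=
  ⟨IsStable.swap, IsStable.swap⟩

theorem IsStable.exists_precedes_of_wouldAccept (hμ : p.IsStable μ) (h : p.WouldAccept μ b a) :
    ∃ b', μ a b' ∧ Precedes (p.left a) b' b := by
  obtain ⟨b', hb', hnot⟩ : ∃ b', μ a b' ∧ ¬ Precedes (p.left a) b b' := by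
    simpa [IsBlocking, h] using hμ.not_isBlocking a b
  exact ⟨b', hb', .of_not h.1 (hμ.le a b' hb') (fun e => h.not_rel (e ▸ hb')) hnot⟩

theorem IsStable.exists_precedes_right (hν : p.IsStable ν) (hE : E a b) (hab' : ν a b')
    (hbb' : Precedes (p.left a) b b') : ∃ a', ν a' b ∧ Precedes (p.right b) a' a :=
  hν.swap.exists_precedes_of_wouldAccept
    ⟨hE, fun _ hab'' => hν.biUnique.2 hab' hab'' ▸ hbb'⟩

theorem isStable_isCouple_iff {x : I ↪ A} {y : I ↪ B} (hE : ∀ i, E (x i) (y i)) :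
    p.IsStable (IsCouple x y) ↔ ∀ a b, ¬ p.IsBlocking (IsCouple x y) a b := by
  refine ⟨IsStable.not_isBlocking, fun h => ⟨?_, biUnique_isCouple, h⟩⟩
  rintro _ _ ⟨i, rfl, rfl⟩
  exact hE i

end Stability

section Improvement

/-- The agent `b` is matched to `a` in `ν` and prefers this to its situation in `μ`. -/
def IsImproving (p : PrefProfile E L K) (μ ν : A → B → Prop) (a : A) (b : B) : Prop :=
  ν a b ∧ p.WouldAccept μ b a

theorem IsStable.exists_isImproving (hμ : p.IsStable μ) (hopt : ¬ p.IsRightOptimal μ) :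
    ∃ ν, p.IsStable ν ∧ ∃ a b, p.IsImproving μ ν a b := by
  obtain ⟨ν, hν, a', b, hab, hworse⟩ : ∃ ν, p.IsStable ν ∧ ∃ a' b, ν a' b ∧
      ∀ a, μ a b → ¬ (a = a' ∨ Precedes (p.right b) a a') := by
    simpa [IsRightOptimal, hμ] using hopt
  refine ⟨ν, hν, a', b, hab, hν.le a' b hab, fun a ha => ?_⟩
  obtain ⟨hne, hnot⟩ := not_or.1 (hworse a ha)
  exact .of_not (hμ.le a b ha) (hν.le a' b hab) hne hnot

/-- If the `μ`-partner `a` of `b` improves somebody in `ν`, then it prefers `b` to that agent, so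
stability of `ν` forces `b` to be improved too. -/
theorem IsImproving.exists_isImproving_of_rel (hμ : p.IsStable μ) (hν : p.IsStable ν)
    (hab : μ a b) (h : p.IsImproving μ ν a b') : ∃ a', p.IsImproving μ ν a' b := by
  obtain ⟨b'', hab'', hpref⟩ := hμ.exists_precedes_of_wouldAccept h.2
  obtain rfl := hμ.biUnique.2 hab hab''
  have hE := hμ.le a b hab
  obtain ⟨a', ha'b, ha'a⟩ := hν.exists_precedes_right hE h.1 hpref
  exact ⟨a', ha'b, hν.le a' b ha'b, fun c hcb => hμ.biUnique.1 hab hcb ▸ ha'a⟩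

variable [Finite I] {x : I ↪ A} {y : I ↪ B}

/-- The map `g` taking an improved `y i` to its new partner `x (g i)` is injective on the finite set
of couples whose left member improves somebody, hence surjective. -/
theorem IsImproving.exists_isImproving_partner (hμ : p.IsStable (IsCouple x y)) (hν : p.IsStable ν)
    (h : p.IsImproving (IsCouple x y) ν a b) :
    ∃ i, y i = b ∧ ∃ b', p.IsImproving (IsCouple x y) ν (x i) b' := by
  have exists_index : ∀ {a b}, p.IsImproving (IsCouple x y) ν a b → ∃ j, x j = a := fun h => by
    obtain ⟨_, ⟨j, hj, -⟩, -⟩ := hμ.exists_precedes_of_wouldAccept h.2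
    exact ⟨j, hj⟩
  let D := {i // ∃ b, p.IsImproving (IsCouple x y) ν (x i) b}
  have hg : ∀ i : D, ∃ j : D, p.IsImproving (IsCouple x y) ν (x j) (y i) := by
    rintro ⟨i, b', hb'⟩
    obtain ⟨a', ha'⟩ := hb'.exists_isImproving_of_rel hμ hν ⟨i, rfl, rfl⟩
    obtain ⟨j, rfl⟩ := exists_index ha'
    exact ⟨⟨j, _, ha'⟩, ha'⟩
  choose g hg using hg
  have hinj : Function.Injective g := fun i i' hii' =>
    Subtype.ext (y.injective (hν.biUnique.2 (hg i).1 (hii' ▸ (hg i').1)))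
  obtain ⟨j, rfl⟩ := exists_index h
  obtain ⟨i, hi⟩ := Finite.injective_iff_surjective.1 hinj ⟨j, b, h⟩
  have hji := hg i
  rw [hi] at hji
  exact ⟨i, hν.biUnique.2 hji.1 h.1, i.2⟩

end Improvement

section Rotation

variable {x : I ↪ A} {y : I ↪ B} {i j : I}

/-- Among the agents that would accept `x i`, the favourite of `x i` is `y j`. In a stable matching
`y j` is the next agent that `x i` would turn to after `y i`, and the directed cycles of this
relation are the rotations of Irving and Gusfield. -/
def IsNext (p : PrefProfile E L K) (x : I ↪ A) (y : I ↪ B) (i j : I) : Prop :=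
  p.WouldAccept (IsCouple x y) (y j) (x i) ∧
    ∀ b, p.WouldAccept (IsCouple x y) b (x i) → b = y j ∨ Precedes (p.left (x i)) (y j) b

theorem not_isNext_self : ¬ p.IsNext x y i i := fun h => h.1.not_rel ⟨i, rfl, rfl⟩

theorem rightUnique_isNext : Relator.RightUnique (p.IsNext x y) := fun _ j j' h h' => by
  rcases h.2 _ h'.1 with e | hlt
  · exact (y.injective e).symm
  · exact y.injective ((h'.2 _ h.1).resolve_right hlt.asymm)

theorem isStable_of_movesAlong_isNext (hμ : p.IsStable (IsCouple x y)) {σ : Equiv.Perm I}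
    (hσ : MovesAlong (p.IsNext x y) σ) : p.IsStable (IsCouple x (σ.toEmbedding.trans y)) := by
  have hE : ∀ i, E (x i) (y (σ i)) := fun i => by
    by_cases hi : σ i = i
    · exact hi.symm ▸ hμ.le _ _ ⟨i, rfl, rfl⟩
    · exact (hσ i hi).1.1
  refine (isStable_isCouple_iff hE).2 fun a b ⟨hacc, hpref⟩ => ?_
  have hacc' : p.WouldAccept (IsCouple x y) b a := by
    refine ⟨hacc.1, ?_⟩
    rintro _ ⟨j, rfl, rfl⟩
    obtain ⟨i, rfl⟩ := σ.surjective j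
    have hai := hacc.2 (x i) ⟨i, rfl, rfl⟩
    by_cases hi : σ i = i
    · rwa [hi] at hai ⊢
    · exact hai.trans ((hσ i hi).1.2 _ ⟨σ i, rfl, rfl⟩)
  refine hμ.not_isBlocking a b ⟨hacc', ?_⟩
  rintro _ ⟨i, rfl, rfl⟩
  have hbi := hpref (y (σ i)) ⟨i, rfl, rfl⟩
  by_cases hi : σ i = i
  · rwa [hi] at hbi
  · rcases (hσ i hi).2 b hacc' with rfl | hlt
    · exact absurd hbi Precedes.irrefl
    · exact absurd hbi hlt.asymm

theorem not_isRightOptimal_of_movesAlong_isNext (hμ : p.IsStable (IsCouple x y))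
    {σ : Equiv.Perm I} (hne : σ ≠ 1) (hσ : MovesAlong (p.IsNext x y) σ) :
    ¬ p.IsRightOptimal (IsCouple x y) := fun hopt => by
  obtain ⟨i, hi⟩ : ∃ i, σ i ≠ i := by
    by_contra! h
    exact hne (Equiv.ext h)
  obtain ⟨a, hmatched, hbetter⟩ :=
    hopt.2 _ (isStable_of_movesAlong_isNext hμ hσ) (x i) (y (σ i)) ⟨i, rfl, rfl⟩
  have hworse := (hσ i hi).1.2 a hmatched
  rcases hbetter with rfl | hbetter
  · exact hworse.irrefl
  · exact hworse.asymm hbetter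

variable [Finite B] [Finite I]

theorem IsImproving.exists_isNext (hμ : p.IsStable (IsCouple x y)) (hν : p.IsStable ν)
    (h : p.IsImproving (IsCouple x y) ν (x i) b) :
    ∃ j, (∃ b', p.IsImproving (IsCouple x y) ν (x j) b') ∧ p.IsNext x y i j := by
  obtain ⟨d, hacc, hfirst⟩ := Precedes.exists_first (r := p.left (x i))
    (C := fun b => p.WouldAccept (IsCouple x y) b (x i)) (fun _ h => h.1) ⟨b, h.2⟩
  obtain ⟨a, ha⟩ : ∃ a, p.IsImproving (IsCouple x y) ν a d := by
    rcases hfirst b h.2 with rfl | hdb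
    · exact ⟨x i, h⟩
    · obtain ⟨a, had, hai⟩ := hν.exists_precedes_right hacc.1 h.1 hdb
      exact ⟨a, had, hacc.trans hai⟩
  obtain ⟨j, rfl, hj⟩ := ha.exists_isImproving_partner hμ hν
  exact ⟨j, hj, hacc, hfirst⟩

theorem isRightOptimal_iff_not_exists_movesAlong (hμ : p.IsStable (IsCouple x y)) :
    p.IsRightOptimal (IsCouple x y) ↔
      ¬ ∃ σ : Equiv.Perm I, σ ≠ 1 ∧ MovesAlong (p.IsNext x y) σ := by
  refine ⟨fun h ⟨σ, hne, hσ⟩ => not_isRightOptimal_of_movesAlong_isNext hμ hne hσ h, fun h => ?_⟩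
  by_contra hopt
  obtain ⟨ν, hν, a, b, hab⟩ := hμ.exists_isImproving hopt
  obtain ⟨i, -, hi⟩ := hab.exists_isImproving_partner hμ hν
  exact h (exists_movesAlong_ne_one (fun _ => not_isNext_self)
    (S := {i | ∃ b, p.IsImproving (IsCouple x y) ν (x i) b}) ⟨i, hi⟩
    fun _ ⟨_, h⟩ => h.exists_isNext hμ hν)

end Rotation

section Counting

variable {x : I ↪ A} {y : I ↪ B} {σ : Equiv.Perm I}

/-- The blocking pairs of the matching `(x i, y i)` are exactly the pairs `(x i, y (σ i))` with
`σ i ≠ i`. -/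
def BlocksExactly (p : PrefProfile E L K) (x : I ↪ A) (y : I ↪ B) (σ : Equiv.Perm I) : Prop :=
  ∀ a b, p.IsBlocking (IsCouple x y) a b ↔ ∃ i, σ i ≠ i ∧ x i = a ∧ y (σ i) = b

theorem blocksExactly_swap : p.swap.BlocksExactly y x σ⁻¹ ↔ p.BlocksExactly x y σ := by
  rw [BlocksExactly, forall_comm]
  refine forall_congr' fun a => forall_congr' fun b => ?_
  rw [isCouple_flip, isBlocking_swap]
  refine iff_congr Iff.rfl ⟨?_, ?_⟩
  · rintro ⟨i, hi, rfl, rfl⟩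
    exact ⟨σ⁻¹ i, by simpa using hi.symm, rfl, by simp⟩
  · rintro ⟨i, hi, rfl, rfl⟩
    exact ⟨σ i, by simpa using hi.symm, rfl, by simp⟩

/-- Relabel the neighbours of each `a` by the permutation `s a` before ranking them. -/
def permuteLeft (s : A → Equiv.Perm B) (hs : ∀ a b, E a b ↔ E a (s a b)) :
    Equiv.Perm (PrefProfile E L K) where
  toFun p := ⟨fun a => ((s a).subtypeEquiv (hs a)).trans (p.left a), p.right⟩
  invFun p := ⟨fun a => ((s a).subtypeEquiv (hs a)).symm.trans (p.left a), p.right⟩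
  left_inv p := by simp [← Equiv.trans_assoc]
  right_inv p := by simp [← Equiv.trans_assoc]

theorem isBlocking_permuteLeft {s : A → Equiv.Perm B} {hs : ∀ a b, E a b ↔ E a (s a b)} :
    (permuteLeft s hs p).IsBlocking μ a b ↔
      p.WouldAccept μ b a ∧ ∀ b', μ a b' → Precedes (p.left a) (s a b) (s a b') :=
  and_congr Iff.rfl (forall₂_congr fun _ _ => Precedes.equiv_trans_iff (hs a))

section Exchange

variable [DecidableEq B]

/-- For each `i`, the transposition of `y i` and `y (σ i)`, to be applied to the list of `x i`. -/
noncomputable def exchange (x : I ↪ A) (y : I ↪ B) (σ : Equiv.Perm I) : A → Equiv.Perm B :=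
  Function.extend x (fun i => Equiv.swap (y i) (y (σ i))) 1

theorem exchange_apply (i : I) : exchange x y σ (x i) = Equiv.swap (y i) (y (σ i)) :=
  x.injective.extend_apply _ _ i

theorem exchange_eq_one (ha : ¬ ∃ i, σ i ≠ i ∧ x i = a) : exchange x y σ a = 1 := by
  by_cases h : ∃ i, x i = a
  · obtain ⟨i, rfl⟩ := h
    have hi : σ i = i := by_contra fun hi => ha ⟨i, hi, rfl⟩
    rw [exchange_apply, hi, Equiv.swap_self]
    rfl
  · exact Function.extend_apply' _ _ a h

theorem rel_exchange_iff (hE : ∀ i, E (x i) (y i)) (hEσ : ∀ i, E (x i) (y (σ i))) (a : A) (b : B) :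
    E a b ↔ E a (exchange x y σ a b) := by
  by_cases h : ∃ i, x i = a
  · obtain ⟨i, rfl⟩ := h
    rw [exchange_apply, Equiv.swap_apply_def]
    split_ifs with h₁ h₂
    · simp [h₁, hE, hEσ]
    · simp [h₂, hE, hEσ]
    · rfl
  · rw [exchange_eq_one fun ⟨i, _, hi⟩ => h ⟨i, hi⟩, Equiv.Perm.one_apply]

theorem isBlocking_permuteLeft_exchange_iff (hE : ∀ i, E (x i) (y i))
    (hEσ : ∀ i, E (x i) (y (σ i))) {i : I} (hi : σ i ≠ i) :
    (∀ b, (permuteLeft (exchange x y σ) (rel_exchange_iff hE hEσ) p).IsBlocking (IsCouple x y)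
      (x i) b ↔ b = y (σ i)) ↔
      (∀ b, ¬ p.IsBlocking (IsCouple x y) (x i) b) ∧ p.IsNext x y i (σ i) := by
  have key := Precedes.unique_precedes_swap_iff (r := p.left (x i))
    (C := fun b => p.WouldAccept (IsCouple x y) b (x i)) (fun _ h => h.1) (hE i) (hEσ i)
    (fun h => h.not_rel ⟨i, rfl, rfl⟩) (y.injective.ne hi.symm)
  simp only [isBlocking_permuteLeft, exchange_apply]
  simpa [IsBlocking, IsNext] using key

theorem blocksExactly_permuteLeft_exchange_iff (hE : ∀ i, E (x i) (y i))
    (hEσ : ∀ i, E (x i) (y (σ i))) :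
    (permuteLeft (exchange x y σ) (rel_exchange_iff hE hEσ) p).BlocksExactly x y σ ↔
      p.IsStable (IsCouple x y) ∧ MovesAlong (p.IsNext x y) σ := by
  have hunmoved : ∀ a, (¬ ∃ i, σ i ≠ i ∧ x i = a) → ∀ b,
      (permuteLeft (exchange x y σ) (rel_exchange_iff hE hEσ) p).IsBlocking (IsCouple x y) a b ↔
        p.IsBlocking (IsCouple x y) a b := fun a ha b => by
    rw [isBlocking_permuteLeft, exchange_eq_one ha]
    rfl
  have hmoved := fun i => isBlocking_permuteLeft_exchange_iff (p := p) hE hEσ (i := i)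
  rw [isStable_isCouple_iff hE]
  constructor
  · intro h
    have hrow : ∀ i, σ i ≠ i →
        (∀ b, ¬ p.IsBlocking (IsCouple x y) (x i) b) ∧ p.IsNext x y i (σ i) := fun i hi =>
      (hmoved i hi).1 fun b => (h _ b).trans
        ⟨fun ⟨j, _, hj, hb⟩ => x.injective hj ▸ hb.symm, fun hb => ⟨i, hi, rfl, hb.symm⟩⟩
    refine ⟨fun a b hb => ?_, fun i hi => (hrow i hi).2⟩
    by_cases ha : ∃ i, σ i ≠ i ∧ x i = a
    · obtain ⟨i, hi, rfl⟩ := ha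
      exact (hrow i hi).1 b hb
    · obtain ⟨i, hi, hia, -⟩ := (h a b).1 ((hunmoved a ha b).2 hb)
      exact ha ⟨i, hi, hia⟩
  · rintro ⟨hstable, hσ⟩ a b
    by_cases ha : ∃ i, σ i ≠ i ∧ x i = a
    · obtain ⟨i, hi, rfl⟩ := ha
      rw [(hmoved i hi).2 ⟨hstable (x i), hσ i hi⟩ b]
      exact ⟨fun hb => ⟨i, hi, rfl, hb.symm⟩, fun ⟨j, _, hj, hb⟩ => x.injective hj ▸ hb.symm⟩
    · rw [hunmoved a ha b]
      exact iff_of_false (hstable a b) fun ⟨i, hi, hia, _⟩ => ha ⟨i, hi, hia⟩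

end Exchange

theorem card_isStable_movesAlong_eq_card_blocksExactly (hE : ∀ i, E (x i) (y i))
    (σ : Equiv.Perm I) :
    Nat.card {p : PrefProfile E L K // p.IsStable (IsCouple x y) ∧ MovesAlong (p.IsNext x y) σ} =
      Nat.card {p : PrefProfile E L K // p.BlocksExactly x y σ} := by
  classical
  by_cases hEσ : ∀ i, E (x i) (y (σ i))
  · exact Nat.card_congr (Equiv.subtypeEquiv (permuteLeft _ (rel_exchange_iff hE hEσ)) fun p =>
      (blocksExactly_permuteLeft_exchange_iff hE hEσ).symm)
  · obtain ⟨i, hEi⟩ := not_forall.1 hEσ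
    have hi : σ i ≠ i := fun h => hEi (h.symm ▸ hE i)
    have : IsEmpty {p : PrefProfile E L K //
        p.IsStable (IsCouple x y) ∧ MovesAlong (p.IsNext x y) σ} :=
      ⟨fun p => hEi (p.2.2 i hi).1.1⟩
    have : IsEmpty {p : PrefProfile E L K // p.BlocksExactly x y σ} :=
      ⟨fun p => hEi ((p.2 _ _).2 ⟨i, hi, rfl, rfl⟩).1.1⟩
    simp only [Nat.card_of_isEmpty]

end Counting

section Symmetry

variable [Finite B]

section

variable [Fintype I] [DecidableEq I] {x : I ↪ A} {y : I ↪ B}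

open Classical in
theorem ite_isRightOptimal_eq_sum (p : PrefProfile E L K) (x : I ↪ A) (y : I ↪ B) :
    (if p.IsRightOptimal (IsCouple x y) then 1 else 0 : ℤ) =
      ∑ σ : Equiv.Perm I, if p.IsStable (IsCouple x y) ∧ MovesAlong (p.IsNext x y) σ then
        (-1) ^ σ.cycleType.card else 0 := by
  by_cases hμ : p.IsStable (IsCouple x y)
  · simp only [hμ, true_and, sum_movesAlong_neg_one_pow rightUnique_isNext,
      isRightOptimal_iff_not_exists_movesAlong hμ, ite_not]
  · simp only [hμ, false_and, if_false, Finset.sum_const_zero, IsRightOptimal]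

variable [Finite A]

theorem natCast_card_isRightOptimal (hE : ∀ i, E (x i) (y i)) :
    (Nat.card {p : PrefProfile E L K // p.IsRightOptimal (IsCouple x y)} : ℤ) =
      ∑ σ : Equiv.Perm I, (-1) ^ σ.cycleType.card *
        (Nat.card {p : PrefProfile E L K // p.BlocksExactly x y σ} : ℤ) := by
  classical
  have := Fintype.ofFinite (PrefProfile E L K)
  calc (Nat.card {p : PrefProfile E L K // p.IsRightOptimal (IsCouple x y)} : ℤ)
      = ∑ p : PrefProfile E L K, ∑ σ : Equiv.Perm I,
          if p.IsStable (IsCouple x y) ∧ MovesAlong (p.IsNext x y) σ then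
            (-1) ^ σ.cycleType.card else 0 := by
        simp only [← ite_isRightOptimal_eq_sum, Nat.card_eq_fintype_card,
          Fintype.card_subtype, Finset.natCast_card_filter]
    _ = ∑ σ : Equiv.Perm I, (-1) ^ σ.cycleType.card * (Nat.card {p : PrefProfile E L K //
          p.IsStable (IsCouple x y) ∧ MovesAlong (p.IsNext x y) σ} : ℤ) := by
        rw [Finset.sum_comm]
        simp only [Nat.card_eq_fintype_card, Fintype.card_subtype, Finset.natCast_card_filter,
          Finset.mul_sum, mul_ite, mul_one, mul_zero]
    _ = _ := by simp only [card_isStable_movesAlong_eq_card_blocksExactly hE]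

theorem natCast_card_isLeftOptimal (hE : ∀ i, E (x i) (y i)) :
    (Nat.card {p : PrefProfile E L K // p.IsLeftOptimal (IsCouple x y)} : ℤ) =
      ∑ σ : Equiv.Perm I, (-1) ^ σ.cycleType.card *
        (Nat.card {p : PrefProfile E L K // p.BlocksExactly x y σ} : ℤ) := by
  have hswap : Nat.card {p : PrefProfile E L K // p.IsLeftOptimal (IsCouple x y)} =
      Nat.card {p : PrefProfile (fun b a => E a b) K L // p.IsRightOptimal (IsCouple y x)} :=
    Nat.card_congr (swapEquiv.subtypeEquiv fun p => by rw [isCouple_flip]; rfl)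
  rw [hswap, natCast_card_isRightOptimal (x := y) (y := x) hE, ← Equiv.sum_comp (Equiv.inv _)]
  refine Finset.sum_congr rfl fun σ _ => ?_
  rw [Equiv.inv_apply, Equiv.Perm.cycleType_inv]
  congr 2
  exact (Nat.card_congr (swapEquiv.subtypeEquiv fun p => blocksExactly_swap.symm)).symm

end

theorem card_isRightOptimal_eq_card_isLeftOptimal [Finite A] (hle : ∀ a b, μ a b → E a b)
    (hμ : Relator.BiUnique μ) :
    Nat.card {p : PrefProfile E L K // p.IsRightOptimal μ} =
      Nat.card {p : PrefProfile E L K // p.IsLeftOptimal μ} := by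
  classical
  obtain ⟨x, y, hxy⟩ := exists_isCouple_eq hμ
  have := Fintype.ofFinite {e : A × B // μ e.1 e.2}
  have hE : ∀ i, E (x i) (y i) := fun i => hle _ _ (hxy.le _ _ ⟨i, rfl, rfl⟩)
  rw [← hxy]
  exact_mod_cast (natCast_card_isRightOptimal hE).trans (natCast_card_isLeftOptimal hE).symm

end Symmetry

end PrefProfile

section PartialMatching

variable {M W : Type*} {E ν : Finset (M × W)}

theorem IsPartialMatching.biUnique (hν : IsPartialMatching E ν) :
    Relator.BiUnique fun m w => (m, w) ∈ ν :=
  ⟨fun _ _ _ h₁ h₂ => congrArg Prod.fst (hν.2 _ h₁ _ h₂ (.inr rfl)),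
    fun _ _ _ h₁ h₂ => congrArg Prod.snd (hν.2 _ h₁ _ h₂ (.inl rfl))⟩

theorem isPartialMatching_iff_biUnique :
    IsPartialMatching E ν ↔ ν ⊆ E ∧ Relator.BiUnique fun m w => (m, w) ∈ ν := by
  refine ⟨fun hν => ⟨hν.1, hν.biUnique⟩, fun ⟨hle, hν⟩ => ⟨hle, ?_⟩⟩
  rintro ⟨m, w⟩ h ⟨m', w'⟩ h' (rfl | rfl)
  · rw [hν.2 h h']
  · rw [hν.1 h h']

end PartialMatching

section IncProfile

variable {E ν : Finset (Mn × Wn)} {p : IncProfile E}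

/-- Incomplete profiles as profiles on the relation `(m, w) ∈ E`, men being the left side. -/
def incProfileEquiv (E : Finset (Mn × Wn)) : IncProfile E ≃
    PrefProfile (fun m w => (m, w) ∈ E) (fun m => Fin (Fintype.card {w : Wn // (m, w) ∈ E}))
      fun w => Fin (Fintype.card {m : Mn // (m, w) ∈ E}) :=
  ⟨fun p => ⟨p.1, p.2⟩, fun p => (p.left, p.right), fun _ => rfl, fun _ => rfl⟩

theorem isBlocking_incProfileEquiv {m : Mn} {w : Wn} :
    (incProfileEquiv E p).IsBlocking (fun m w => (m, w) ∈ ν) m w ↔ Blocks E p ν m w :=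
  ⟨fun ⟨⟨hE, hw⟩, hm⟩ => ⟨hE, hm, hw⟩, fun ⟨hE, hm, hw⟩ => ⟨⟨hE, hw⟩, hm⟩⟩

theorem isStable_incProfileEquiv :
    (incProfileEquiv E p).IsStable (fun m w => (m, w) ∈ ν) ↔ IsStable E p ν := by
  simp only [IsStable, isPartialMatching_iff_biUnique, not_exists, ← isBlocking_incProfileEquiv]
  exact ⟨fun h => ⟨⟨fun e he => h.le _ _ he, h.biUnique⟩, h.not_isBlocking⟩,
    fun ⟨⟨hle, hν⟩, hb⟩ => ⟨fun _ _ h => hle h, hν, hb⟩⟩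

theorem forall_isStable_incProfileEquiv {P : (Mn → Wn → Prop) → Prop} :
    (∀ ν, (incProfileEquiv E p).IsStable ν → P ν) ↔
      ∀ ν, IsStable E p ν → P fun m w => (m, w) ∈ ν := by
  refine ⟨fun h ν hν => h _ (isStable_incProfileEquiv.2 hν), fun h ν hν => ?_⟩
  classical
  obtain ⟨ν', rfl⟩ : ∃ ν' : Finset (Mn × Wn), ν = fun m w => (m, w) ∈ ν' :=
    ⟨Finset.univ.filter fun e => ν e.1 e.2, by simp⟩
  exact h ν' (isStable_incProfileEquiv.1 hν)

theorem isRightOptimal_incProfileEquiv :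
    (incProfileEquiv E p).IsRightOptimal (fun m w => (m, w) ∈ ν) ↔ IsWomenOptimal E p ν :=
  and_congr isStable_incProfileEquiv forall_isStable_incProfileEquiv

theorem isLeftOptimal_incProfileEquiv :
    (incProfileEquiv E p).IsLeftOptimal (fun m w => (m, w) ∈ ν) ↔ IsMenOptimal E p ν := by
  refine and_congr (PrefProfile.isStable_swap.trans isStable_incProfileEquiv) ?_
  rw [← forall_isStable_incProfileEquiv (P := fun ν' => ∀ m w', ν' m w' → ∃ w, (m, w) ∈ ν ∧
    (w = w' ∨ PrefM p m w w'))]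
  exact ⟨fun h ν' hν' m w' => h _ hν'.swap w' m, fun h ν' hν' w' m => h _ hν'.swap m w'⟩

end IncProfile

/-- For every fixed partial matching `μ ⊆ E`, the number of incomplete preference profiles
for which `μ` is stable and women-optimal equals the number of profiles for which `μ` is
stable and men-optimal; hence, under the incomplete uniform preference distribution, the
output distributions of WPDA and MPDA are identical. -/
theorem card_womenOptimal_eq_card_menOptimal (E μ : Finset (Mn × Wn))
    (hμ : IsPartialMatching E μ) :
    Nat.card {p : IncProfile E // IsWomenOptimal E p μ} =
      Nat.card {p : IncProfile E // IsMenOptimal E p μ} := by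
  let μ' : Mn → Wn → Prop := fun m w => (m, w) ∈ μ
  calc Nat.card {p : IncProfile E // IsWomenOptimal E p μ}
      = Nat.card {p // PrefProfile.IsRightOptimal p μ'} :=
        Nat.card_congr ((incProfileEquiv E).subtypeEquiv fun _ =>
          isRightOptimal_incProfileEquiv.symm)
    _ = Nat.card {p // PrefProfile.IsLeftOptimal p μ'} :=
        PrefProfile.card_isRightOptimal_eq_card_isLeftOptimal (fun _ _ h => hμ.1 h) hμ.biUnique
    _ = Nat.card {p : IncProfile E // IsMenOptimal E p μ} :=
        (Nat.card_congr ((incProfileEquiv E).subtypeEquiv fun _ =>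
          isLeftOptimal_incProfileEquiv.symm)).symm

end
end

section
/- Pittel's integral formula for permutations: under the uniform preference distribution (realized by X, Y uniform on ([0,1]^{M×W})², smaller values preferred), for every permutation σ of M ⊔ W, the probability that σ is a stable permutation equals the iterated integral over x ∈ [0,1]^M and y ∈ [0,1]^W of the product of: x_m over all pairs (m,w) with σ(m) = w and σ(w) ≠ m; times y_w over all pairs (m,w) with σ(m) ≠ w and σ(w) = m; times (1 − x_m · y_w) over all pairs (m,w) with σ(m) ≠ w and σ(w) ≠ m. -/
open MeasureTheory

/-- A permutation `σ` of `M ⊔ W` exchanging the two sides, encoded as the pair of bijections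
`a : M ≃ W` (`σ m = a m`) and `b : W ≃ M` (`σ w = b w`), so that `σ⁻¹ m = b.symm m` and
`σ⁻¹ w = a.symm w`.  It is stable for the uniform preference model induced by `XY = (X, Y)`
(smaller values preferred) if every person weakly prefers their successor to their
predecessor and there is no pair `(m, w)` with `σ m ≠ w`, `σ w ≠ m`, `w ≻ₘ σ⁻¹ m`
and `m ≻_w σ⁻¹ w`. -/
def IsStablePerm {N : ℕ} (XY : (Fin N × Fin N → ℝ) × (Fin N × Fin N → ℝ))
    (a b : Fin N ≃ Fin N) : Prop :=
  (∀ m, a m = b.symm m ∨ XY.1 (m, a m) < XY.1 (m, b.symm m)) ∧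
  (∀ w, b w = a.symm w ∨ XY.2 (b w, w) < XY.2 (a.symm w, w)) ∧
  ¬ ∃ m w, a m ≠ w ∧ b w ≠ m ∧
    XY.1 (m, w) < XY.1 (m, b.symm m) ∧ XY.2 (m, w) < XY.2 (a.symm w, w)

/-- The uniform probability measure on `([0,1]^{M×W})²`. -/
noncomputable def unifBox (N : ℕ) :
    Measure ((Fin N × Fin N → ℝ) × (Fin N × Fin N → ℝ)) :=
  (Measure.pi fun _ : Fin N × Fin N => volume.restrict (Set.Icc (0:ℝ) 1)).prod
    (Measure.pi fun _ : Fin N × Fin N => volume.restrict (Set.Icc (0:ℝ) 1))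

/-! Stability of `σ` compares every score `X (m, w)` with the score `x m` that `m` gives to his
predecessor, and every score `Y (m, w)` with the score `y w` that `w` gives to hers. Conditionally
on `x` and `y` it therefore splits into one condition on each pair `(X (m, w), Y (m, w))`, and these
pairs are independent. The conditioning is made explicit by resampling: draw `x` and `y`
independently of full score tables and write them over the predecessors' entries, which does not
change their law. For uniform scores the conditions have probability `1`, `x m`, `y w` or
`1 - x m * y w`, according to which of `σ m = w` and `σ w = m` hold. -/

section ProductMeasures

lemma measurable_extend {ι κ α : Type*} [MeasurableSpace α] (s : κ → ι) :
    Measurable fun z : (κ → α) × (ι → α) => Function.extend s z.1 z.2 := by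
  classical
  refine measurable_pi_lambda _ fun i => ?_
  simp only [Function.extend_def]
  split_ifs <;> fun_prop

lemma extend_preimage_univ_pi {ι κ α : Type*} {s : κ → ι} (hs : Function.Injective s)
    (t : ι → Set α) :
    (fun z : (κ → α) × (ι → α) => Function.extend s z.1 z.2) ⁻¹' Set.univ.pi t =
      (Set.univ.pi fun k => t (s k)) ×ˢ (Set.range s)ᶜ.pi t := by
  ext ⟨x, X⟩
  simp only [Set.mem_preimage, Set.mem_univ, forall_true_left, Set.mem_prod, Set.mem_pi,
    Set.mem_compl_iff]
  constructor
  · intro h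
    exact ⟨fun k => hs.extend_apply x X k ▸ h (s k),
      fun i hi => Function.extend_apply' x X i hi ▸ h i⟩
  · rintro ⟨hx, hX⟩ i
    by_cases hi : i ∈ Set.range s
    · obtain ⟨k, rfl⟩ := hi
      exact (hs.extend_apply x X k).symm ▸ hx k
    · exact (Function.extend_apply' x X i hi).symm ▸ hX i hi

lemma measurePreserving_extend {ι κ α : Type*} [Fintype ι] [Fintype κ] [MeasurableSpace α]
    {s : κ → ι} (hs : Function.Injective s) (μ : ι → Measure α)
    [∀ i, IsProbabilityMeasure (μ i)] :
    MeasurePreserving (fun z : (κ → α) × (ι → α) => Function.extend s z.1 z.2)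
      ((Measure.pi fun k => μ (s k)).prod (Measure.pi μ)) (Measure.pi μ) := by
  classical
  refine ⟨measurable_extend s, (Measure.pi_eq fun t ht => ?_).symm⟩
  have hcompl : (Set.range s)ᶜ = ((Finset.univ.image s)ᶜ : Finset ι) := by simp
  rw [Measure.map_apply (measurable_extend s) (.univ_pi ht), extend_preimage_univ_pi hs,
    Measure.prod_prod, Measure.pi_pi, hcompl, Measure.pi_pi_finset,
    ← Finset.prod_mul_prod_compl (Finset.univ.image s), Finset.prod_image hs.injOn]

lemma measurePreserving_prodProdProdComm {α β γ δ : Type*} [MeasurableSpace α]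
    [MeasurableSpace β] [MeasurableSpace γ] [MeasurableSpace δ] (μ : Measure α) (ν : Measure β)
    (ρ : Measure γ) (τ : Measure δ) [SFinite μ] [SFinite ν] [SFinite ρ] [SFinite τ] :
    MeasurePreserving (fun z : (α × β) × (γ × δ) => ((z.1.1, z.2.1), (z.1.2, z.2.2)))
      ((μ.prod ν).prod (ρ.prod τ)) ((μ.prod ρ).prod (ν.prod τ)) := by
  have middle : MeasurePreserving (fun z : β × γ × δ => (z.2.1, z.1, z.2.2))
      (ν.prod (ρ.prod τ)) (ρ.prod (ν.prod τ)) :=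
    (measurePreserving_prodAssoc ρ ν τ).comp <|
      (Measure.measurePreserving_swap.prod (.id τ)).comp
        (measurePreserving_prodAssoc ν ρ τ).symm
  exact (measurePreserving_prodAssoc μ ρ (ν.prod τ)).symm.comp <|
    ((MeasurePreserving.id μ).prod middle).comp (measurePreserving_prodAssoc μ ν (ρ.prod τ))

lemma measureReal_pi_prod_pi_forall_mem {ι α β : Type*} [Fintype ι] [MeasurableSpace α]
    [MeasurableSpace β] (μ : ι → Measure α) (ν : ι → Measure β) [∀ i, SigmaFinite (μ i)]
    [∀ i, SigmaFinite (ν i)] (t : ι → Set (α × β)) :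
    ((Measure.pi μ).prod (Measure.pi ν)).real {u | ∀ i, (u.1 i, u.2 i) ∈ t i} =
      ∏ i, ((μ i).prod (ν i)).real (t i) := by
  have hpre : MeasurableEquiv.arrowProdEquivProdArrow α β ι ⁻¹'
      {u | ∀ i, (u.1 i, u.2 i) ∈ t i} = Set.univ.pi t := by
    ext u
    simp [MeasurableEquiv.arrowProdEquivProdArrow, Equiv.arrowProdEquivProdArrow]
  rw [measureReal_def,
    ← (measurePreserving_arrowProdEquivProdArrow α β ι μ ν).measure_preimage_equiv, hpre,
    Measure.pi_pi, ENNReal.toReal_prod]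
  rfl

end ProductMeasures

section UnitInterval

instance isProbabilityMeasure_restrict_Icc_zero_one :
    IsProbabilityMeasure ((volume : Measure ℝ).restrict (Set.Icc 0 1)) :=
  ⟨by simp⟩

lemma measureReal_restrict_Icc_zero_one_Iio {x : ℝ} (hx : x ∈ Set.Icc (0 : ℝ) 1) :
    (volume.restrict (Set.Icc (0 : ℝ) 1)).real (Set.Iio x) = x := by
  have hinter : Set.Iio x ∩ Set.Icc 0 1 = Set.Ico 0 x := by
    ext t
    simp only [Set.mem_inter_iff, Set.mem_Iio, Set.mem_Icc, Set.mem_Ico]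
    grind
  rw [measureReal_restrict_apply measurableSet_Iio, hinter, Real.volume_real_Ico_of_le hx.1,
    sub_zero]

end UnitInterval

section PairConditions

variable {M W : Type*} [DecidableEq M] [DecidableEq W]

/-- The values of `(X (m, w), Y (m, w))` that stability of the permutation `σ = (a, b)` allows for
the pair `p = (m, w)`, when `x m` and `y w` are the scores given to the predecessors of `m` and
`w`. -/
def admissibleScores (a : M → W) (b : W → M) (x : M → ℝ) (y : W → ℝ) (p : M × W) : Set (ℝ × ℝ) :=
  if a p.1 = p.2 then
    if b p.2 = p.1 then Set.univ else Set.Iio (x p.1) ×ˢ Set.univ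
  else
    if b p.2 = p.1 then Set.univ ×ˢ Set.Iio (y p.2) else (Set.Iio (x p.1) ×ˢ Set.Iio (y p.2))ᶜ

/-- The factor contributed by the pair `p = (m, w)` to Pittel's integrand for `σ = (a, b)`: the
probability that two independent uniform scores lie in `admissibleScores a b x y p`. -/
def pittelFactor (a : M → W) (b : W → M) (x : M → ℝ) (y : W → ℝ) (p : M × W) : ℝ :=
  if a p.1 = p.2 then
    if b p.2 = p.1 then 1 else x p.1
  else
    if b p.2 = p.1 then y p.2 else 1 - x p.1 * y p.2

lemma prod_pittelFactor [Fintype M] [Fintype W] (a : M → W) (b : W → M) (x : M → ℝ) (y : W → ℝ) :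
    ∏ mw, pittelFactor a b x y mw =
      (∏ mw : M × W with a mw.1 = mw.2 ∧ b mw.2 ≠ mw.1, x mw.1) *
        (∏ mw : M × W with a mw.1 ≠ mw.2 ∧ b mw.2 = mw.1, y mw.2) *
        ∏ mw : M × W with a mw.1 ≠ mw.2 ∧ b mw.2 ≠ mw.1, (1 - x mw.1 * y mw.2) := by
  simp only [Finset.prod_filter, ← Finset.prod_mul_distrib]
  refine Finset.prod_congr rfl fun p _ => ?_
  by_cases ha : a p.1 = p.2 <;> by_cases hb : b p.2 = p.1 <;> simp [pittelFactor, ha, hb]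

lemma continuous_prod_pittelFactor [Fintype M] [Fintype W] (a : M → W) (b : W → M) :
    Continuous fun z : (M → ℝ) × (W → ℝ) => ∏ p, pittelFactor a b z.1 z.2 p := by
  refine continuous_finsetProd _ fun p _ => ?_
  unfold pittelFactor
  split_ifs <;> fun_prop

lemma measureReal_admissibleScores (a : M → W) (b : W → M) {x : M → ℝ} {y : W → ℝ} {p : M × W}
    (hx : x p.1 ∈ Set.Icc (0 : ℝ) 1) (hy : y p.2 ∈ Set.Icc (0 : ℝ) 1) :
    ((volume.restrict (Set.Icc (0 : ℝ) 1)).prod (volume.restrict (Set.Icc (0 : ℝ) 1))).real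
      (admissibleScores a b x y p) = pittelFactor a b x y p := by
  unfold admissibleScores pittelFactor
  split_ifs
  · exact probReal_univ
  · rw [measureReal_prod_prod, measureReal_restrict_Icc_zero_one_Iio hx, probReal_univ, mul_one]
  · rw [measureReal_prod_prod, measureReal_restrict_Icc_zero_one_Iio hy, probReal_univ, one_mul]
  · rw [probReal_compl_eq_one_sub (measurableSet_Iio.prod measurableSet_Iio),
      measureReal_prod_prod, measureReal_restrict_Icc_zero_one_Iio hx,
      measureReal_restrict_Icc_zero_one_Iio hy]

end PairConditions

lemma injective_id_prodMk {α β : Type*} (f : α → β) : Function.Injective fun x => (x, f x) :=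
  Function.LeftInverse.injective (g := Prod.fst) fun _ => rfl

lemma injective_prodMk_id {α β : Type*} (f : α → β) : Function.Injective fun x => (f x, x) :=
  Function.LeftInverse.injective (g := Prod.snd) fun _ => rfl

section StablePermutations

variable {N : ℕ}

lemma measurableSet_isStablePerm (a b : Fin N ≃ Fin N) :
    MeasurableSet {XY | IsStablePerm XY a b} := by
  have hlt {f g : (Fin N × Fin N → ℝ) × (Fin N × Fin N → ℝ) → ℝ} (hf : Measurable f)
      (hg : Measurable g) : Measurable fun XY => f XY < g XY :=
    measurableSet_setOfPred.1 (measurableSet_lt hf hg)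
  refine measurableSet_setOfPred.2 (.and (.forall fun m => ?_) (.and (.forall fun w => ?_) ?_))
  · exact measurable_const.or (hlt (by fun_prop) (by fun_prop))
  · exact measurable_const.or (hlt (by fun_prop) (by fun_prop))
  · refine .not (.exists fun m => .exists fun w => ?_)
    exact measurable_const.and <| measurable_const.and <|
      (hlt (by fun_prop) (by fun_prop)).and (hlt (by fun_prop) (by fun_prop))

lemma isStablePerm_iff_forall_mem_admissibleScores
    (XY : (Fin N × Fin N → ℝ) × (Fin N × Fin N → ℝ)) (a b : Fin N ≃ Fin N) :
    IsStablePerm XY a b ↔ ∀ p, (XY.1 p, XY.2 p) ∈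
      admissibleScores a b (fun m => XY.1 (m, b.symm m)) (fun w => XY.2 (a.symm w, w)) p := by
  constructor
  · rintro ⟨hmen, hwomen, hblock⟩ ⟨m, w⟩
    unfold admissibleScores
    split_ifs with ha hb hb
    · trivial
    · obtain rfl : a m = w := ha
      exact ⟨(hmen m).resolve_left fun h => hb (b.eq_symm_apply.1 h), trivial⟩
    · obtain rfl : b w = m := hb
      exact ⟨trivial, (hwomen w).resolve_left fun h => ha (a.eq_symm_apply.1 h)⟩
    · exact fun h => hblock ⟨m, w, ha, hb, h.1, h.2⟩
  · refine fun h => ⟨fun m => ?_, fun w => ?_, ?_⟩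
    · refine or_iff_not_imp_left.2 fun hm => ?_
      have hb : b (a m) ≠ m := fun hb => hm (b.eq_symm_apply.2 hb)
      have hmem := h (m, a m)
      simp only [admissibleScores, hb, if_true, if_false] at hmem
      exact hmem.1
    · refine or_iff_not_imp_left.2 fun hw => ?_
      have ha : a (b w) ≠ w := fun ha => hw (a.eq_symm_apply.2 ha)
      have hmem := h (b w, w)
      simp only [admissibleScores, ha, if_true, if_false] at hmem
      exact hmem.2
    · rintro ⟨m, w, ha, hb, hX, hY⟩
      have hmem := h (m, w)
      simp only [admissibleScores, ha, hb, if_false] at hmem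
      exact hmem ⟨hX, hY⟩

-- `admissibleScores` never constrains the entries of the predecessors, the only ones overwritten.
lemma isStablePerm_extend_iff (a b : Fin N ≃ Fin N) (x y : Fin N → ℝ)
    (X Y : Fin N × Fin N → ℝ) :
    IsStablePerm (Function.extend (fun m => (m, b.symm m)) x X,
        Function.extend (fun w => (a.symm w, w)) y Y) a b ↔
      ∀ p, (X p, Y p) ∈ admissibleScores a b x y p := by
  have hX {m w} (hb : b w ≠ m) : Function.extend (fun m => (m, b.symm m)) x X (m, w) = X (m, w) :=
    Function.extend_apply' _ _ _ <| by grind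
  have hY {m w} (ha : a m ≠ w) : Function.extend (fun w => (a.symm w, w)) y Y (m, w) = Y (m, w) :=
    Function.extend_apply' _ _ _ <| by grind
  simp only [isStablePerm_iff_forall_mem_admissibleScores,
    (injective_id_prodMk b.symm).extend_apply, (injective_prodMk_id a.symm).extend_apply]
  refine forall_congr' fun ⟨m, w⟩ => ?_
  by_cases ha : a m = w <;> by_cases hb : b w = m <;> simp [admissibleScores, ha, hb, hX, hY]

theorem measureReal_isStablePerm_eq_integral_prod (μ ν : Fin N × Fin N → Measure ℝ)
    [∀ p, IsProbabilityMeasure (μ p)] [∀ p, IsProbabilityMeasure (ν p)] (a b : Fin N ≃ Fin N) :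
    ((Measure.pi μ).prod (Measure.pi ν)).real {XY | IsStablePerm XY a b} =
      ∫ z, ∏ p, ((μ p).prod (ν p)).real (admissibleScores a b z.1 z.2 p)
        ∂(Measure.pi fun m => μ (m, b.symm m)).prod (Measure.pi fun w => ν (a.symm w, w)) := by
  have hresample := ((measurePreserving_extend (injective_id_prodMk b.symm) μ).prod
    (measurePreserving_extend (injective_prodMk_id a.symm) ν)).comp
    (measurePreserving_prodProdProdComm _ _ _ _)
  have hmeas := measurableSet_isStablePerm a b
  rw [measureReal_def, ← hresample.measure_preimage hmeas.nullMeasurableSet,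
    Measure.prod_apply (hresample.measurable hmeas), ← integral_toReal
      (measurable_measure_prodMk_left (hresample.measurable hmeas)).aemeasurable
      (.of_forall fun _ => measure_lt_top _ _)]
  refine integral_congr_ae (.of_forall fun z => ?_)
  dsimp only
  rw [← measureReal_pi_prod_pi_forall_mem, measureReal_def]
  congr 2
  ext u
  exact isStablePerm_extend_iff a b z.1 z.2 u.1 u.2

end StablePermutations

/-- Pittel's integral formula: under the uniform preference distribution, the probability
that a fixed permutation `σ = (a, b)` is stable equals the iterated integral over
`x ∈ [0,1]^M`, `y ∈ [0,1]^W` of `∏ x_m · ∏ y_w · ∏ (1 - x_m y_w)`, the products running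
respectively over pairs with `σ m = w ∧ σ w ≠ m`, with `σ m ≠ w ∧ σ w = m`, and with
`σ m ≠ w ∧ σ w ≠ m`. -/
theorem prob_stablePerm_eq_integral (N : ℕ) (hN : 1 ≤ N) (a b : Fin N ≃ Fin N) :
    (unifBox N {XY | IsStablePerm XY a b}).toReal =
      ∫ x in Set.univ.pi fun _ : Fin N => Set.Icc (0:ℝ) 1,
        ∫ y in Set.univ.pi fun _ : Fin N => Set.Icc (0:ℝ) 1,
          (∏ mw ∈ Finset.univ.filter fun mw : Fin N × Fin N => a mw.1 = mw.2 ∧ b mw.2 ≠ mw.1,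
              x mw.1) *
          (∏ mw ∈ Finset.univ.filter fun mw : Fin N × Fin N => a mw.1 ≠ mw.2 ∧ b mw.2 = mw.1,
              y mw.2) *
          ∏ mw ∈ Finset.univ.filter fun mw : Fin N × Fin N => a mw.1 ≠ mw.2 ∧ b mw.2 ≠ mw.1,
            (1 - x mw.1 * y mw.2) := by
  have hbox : (Measure.pi fun _ : Fin N => (volume : Measure ℝ).restrict (Set.Icc 0 1)) =
      volume.restrict (Set.univ.pi fun _ => Set.Icc 0 1) :=
    (Measure.restrict_pi_pi (fun _ => volume) _).symm
  have hcompact : IsCompact (Set.univ.pi fun _ : Fin N => Set.Icc (0 : ℝ) 1) :=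
    isCompact_univ_pi fun _ => isCompact_Icc
  rw [unifBox, ← measureReal_def, measureReal_isStablePerm_eq_integral_prod, hbox,
    Measure.prod_restrict]
  simp only [← prod_pittelFactor]
  rw [← setIntegral_prod _ ((continuous_prod_pittelFactor a b).continuousOn.integrableOn_compact
    (hcompact.prod hcompact))]
  refine setIntegral_congr_fun (hcompact.prod hcompact).measurableSet fun z hz => ?_
  exact Finset.prod_congr rfl fun p _ =>
    measureReal_admissibleScores a b (hz.1 p.1 trivial) (hz.2 p.2 trivial)
end

section
/- For every complete preference profile there exists a stable matching μ_M that is men-optimal and women-pessimal: for every stable matching μ and every man m, μ_M(m) = μ(m) or μ_M(m) ≻ₘ μ(m), and for every stable matching μ and every woman w, μ⁻¹(w) = μ_M⁻¹(w) or μ⁻¹(w) ≻_w μ_M⁻¹(w). Moreover such μ_M is unique. (Symmetrically there exists a unique women-optimal, men-pessimal stable matching μ_W.) -/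
/-- The matching `μ` is stable for the preference profile `(prefM, prefW)`. -/
def MatchStable {N : ℕ} (prefM prefW : Fin N → Fin N → Fin N → Prop)
    (μ : Fin N ≃ Fin N) : Prop :=
  ¬ ∃ m w, prefM m w (μ m) ∧ prefW w m (μ.symm w)

/-!
Deferred acceptance. Let every man hold a proposal, initially to his favourite woman. While some
woman holds two proposals, she rejects the one she likes less, and the rejected man proposes to the
next woman on his list. Two properties survive every rejection: a woman who has rejected a man holds
a proposal she likes better, and no stable matching pairs a man with a woman who has rejected him.
When no rejection is left to make, the proposals form a matching; the first property makes it stable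
and the second makes it men-optimal. It is then women-pessimal: a woman who liked her man in it
better than her partner in another stable matching would block the latter together with him.
-/

/-- Stability of the matching `μ` between arbitrary types of men and women; for `M = W = Fin N` it
unfolds to `MatchStable`. -/
def IsStableMatching {M W : Type*} (prefM : M → W → W → Prop) (prefW : W → M → M → Prop)
    (μ : M ≃ W) : Prop :=
  ¬ ∃ m w, prefM m w (μ m) ∧ prefW w m (μ.symm w)

/-- The state of deferred acceptance in which each man `m` is proposing to `f m`. The women who have
rejected `m` are not recorded: they are those he prefers to `f m`. Several men may be proposing to
the same woman. -/
structure IsProposalState {M W : Type*} (prefM : M → W → W → Prop) (prefW : W → M → M → Prop)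
    (f : M → W) : Prop where
  exists_better_proposal : ∀ {m w}, prefM m w (f m) → ∃ m', f m' = w ∧ prefW w m' m
  not_prefers_stable : ∀ {μ : M ≃ W}, IsStableMatching prefM prefW μ → ∀ m, ¬ prefM m (μ m) (f m)

/-- The pairs `(m, w)` such that `w` has rejected `m` by the time he proposes to `f m`; deferred
acceptance terminates because this set grows at each step. -/
def rejections {M W : Type*} (prefM : M → W → W → Prop) (f : M → W) : Set (M × W) :=
  {p | prefM p.1 p.2 (f p.1)}

section

variable {M W : Type*} {prefM : M → W → W → Prop} {prefW : W → M → M → Prop}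

theorem isStableMatching_symm {μ : M ≃ W} :
    IsStableMatching prefW prefM μ.symm ↔ IsStableMatching prefM prefW μ := by
  simp only [IsStableMatching, Equiv.symm_symm]
  rw [exists_comm]
  simp only [and_comm]

theorem IsStableMatching.symm_eq_or_prefers [∀ w, Std.Trichotomous (prefW w)] {μ ν : M ≃ W}
    (hν : IsStableMatching prefM prefW ν) (hμν : ∀ m, μ m = ν m ∨ prefM m (μ m) (ν m)) (w : W) :
    ν.symm w = μ.symm w ∨ prefW w (ν.symm w) (μ.symm w) := by
  rcases hμν (μ.symm w) with heq | hlt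
  · left
    rw [Equiv.symm_apply_eq, ← heq, Equiv.apply_symm_apply]
  · rw [Equiv.apply_symm_apply] at hlt
    have hnot : ¬ prefW w (μ.symm w) (ν.symm w) := fun h => hν ⟨_, w, hlt, h⟩
    exact or_iff_not_imp_right.2 fun h => Std.Trichotomous.trichotomous _ _ h hnot

theorem exists_next_choice {r : W → W → Prop} [IsWellFounded W r] [Std.Trichotomous r] {a : W}
    (ha : ∃ b, r a b) : ∃ b, r a b ∧ ∀ c, r c b → c = a ∨ r c a := by
  obtain ⟨b, hab, hmin⟩ := (IsWellFounded.wf (r := r)).has_min {b | r a b} ha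
  exact ⟨b, hab, fun c hcb => or_iff_not_imp_right.2 fun hca =>
    Std.Trichotomous.trichotomous c a hca fun hac => hmin c hac hcb⟩

theorem rejections_ssubset_update [DecidableEq M] {f : M → W} {m : M} {w : W}
    [IsStrictOrder W (prefM m)] (hw : prefM m (f m) w) :
    rejections prefM f ⊂ rejections prefM (Function.update f m w) := by
  refine (Set.ssubset_iff_of_subset ?_).2
    ⟨(m, f m), by simpa [rejections] using hw, irrefl_of (prefM m) (f m)⟩
  rintro ⟨m', v⟩ (hv : prefM m' v (f m'))
  change prefM m' v (Function.update f m w m')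
  by_cases hm : m' = m
  · subst hm
    rw [Function.update_self]
    exact trans_of (prefM m') hv hw
  · rwa [Function.update_of_ne hm]

theorem prefers_or_eq_of_prefers_update [DecidableEq M] {f : M → W} {m : M} {w : W}
    (hnext : ∀ v, prefM m v w → v = f m ∨ prefM m v (f m)) {m' : M} {v : W}
    (hv : prefM m' v (Function.update f m w m')) : prefM m' v (f m') ∨ m' = m ∧ v = f m := by
  by_cases hm : m' = m
  · subst hm
    rw [Function.update_self] at hv
    exact (hnext v hv).symm.imp_right fun h => ⟨rfl, h⟩
  · rw [Function.update_of_ne hm] at hv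
    exact Or.inl hv

theorem exists_update_proposal_not_worse [DecidableEq M] [∀ w, Std.Irrefl (prefW w)] {f : M → W}
    {m₁ m₂ : M} (hf : f m₁ = f m₂) (hlt : prefW (f m₂) m₁ m₂) (w : W) (m : M) :
    ∃ m', Function.update f m₂ w m' = f m ∧ (m' = m ∨ prefW (f m) m' m) := by
  have hne : m₁ ≠ m₂ := ne_of_irrefl hlt
  by_cases hm : m = m₂
  · subst hm
    exact ⟨m₁, by rw [Function.update_of_ne hne, hf], Or.inr hlt⟩
  · exact ⟨m, Function.update_of_ne hm w f, Or.inl rfl⟩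

namespace IsProposalState

theorem of_favourites {f : M → W} (hf : ∀ m w, ¬ prefM m w (f m)) :
    IsProposalState prefM prefW f where
  exists_better_proposal h := absurd h (hf _ _)
  not_prefers_stable _ m := hf m _

theorem isStableMatching [∀ w, Std.Asymm (prefW w)] {μ : M ≃ W}
    (h : IsProposalState prefM prefW μ) : IsStableMatching prefM prefW μ := by
  rintro ⟨m, w, hm, hw⟩
  obtain ⟨m', rfl, hm'⟩ := h.exists_better_proposal hm
  rw [Equiv.symm_apply_apply] at hw
  exact asymm_of (prefW (μ m')) hw hm'

variable {f : M → W} (h : IsProposalState prefM prefW f)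
include h

theorem eq_or_prefers_stable [∀ m, Std.Trichotomous (prefM m)] {μ : M ≃ W}
    (hμ : IsStableMatching prefM prefW μ) (m : M) : f m = μ m ∨ prefM m (f m) (μ m) :=
  or_iff_not_imp_right.2 fun hm =>
    Std.Trichotomous.trichotomous _ _ hm (h.not_prefers_stable hμ m)

theorem prefers_of_notMem_range {m : M} [Std.Trichotomous (prefM m)] {w : W}
    (hw : w ∉ Set.range f) : prefM m (f m) w := by
  rcases trichotomous_of (prefM m) (f m) w with hlt | heq | hgt
  · exact hlt
  · exact absurd ⟨m, heq⟩ hw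
  · obtain ⟨m', hm', -⟩ := h.exists_better_proposal hgt
    exact absurd ⟨m', hm'⟩ hw

/- If `μ` matched `m₂` to `f m₂`, then `m₁` would have a partner in `μ` he likes less than `f m₂`,
and would block `μ` together with `f m₂`. -/
theorem stable_ne_of_rejected [∀ m, Std.Trichotomous (prefM m)] [∀ w, Std.Irrefl (prefW w)]
    {m₁ m₂ : M} (hf : f m₁ = f m₂) (hlt : prefW (f m₂) m₁ m₂) {μ : M ≃ W}
    (hμ : IsStableMatching prefM prefW μ) : μ m₂ ≠ f m₂ := by
  intro heq
  have hne : μ m₁ ≠ μ m₂ := μ.injective.ne (ne_of_irrefl hlt)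
  have hpref : prefM m₁ (f m₂) (μ m₁) := by
    rw [← hf]
    exact (h.eq_or_prefers_stable hμ m₁).resolve_left fun h₁ => hne (by rw [← h₁, hf, heq])
  refine hμ ⟨m₁, f m₂, hpref, ?_⟩
  rwa [← heq, Equiv.symm_apply_apply, heq]

theorem update_of_rejected [DecidableEq M] [∀ m, Std.Trichotomous (prefM m)]
    [∀ w, IsStrictOrder M (prefW w)] {m₁ m₂ : M} (hf : f m₁ = f m₂)
    (hlt : prefW (f m₂) m₁ m₂) {w : W} (hnext : ∀ v, prefM m₂ v w → v = f m₂ ∨ prefM m₂ v (f m₂)) :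
    IsProposalState prefM prefW (Function.update f m₂ w) where
  exists_better_proposal {m v} hv := by
    obtain ⟨m', rfl, hm'⟩ : ∃ m', f m' = v ∧ prefW v m' m := by
      rcases prefers_or_eq_of_prefers_update hnext hv with hv | ⟨rfl, rfl⟩
      · exact h.exists_better_proposal hv
      · exact ⟨m₁, hf, hlt⟩
    obtain ⟨m'', hm'', rfl | hbetter⟩ := exists_update_proposal_not_worse hf hlt w m'
    · exact ⟨m'', hm'', hm'⟩
    · exact ⟨m'', hm'', trans_of (prefW (f m')) hbetter hm'⟩
  not_prefers_stable {μ} hμ m hm := by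
    rcases prefers_or_eq_of_prefers_update hnext hm with hm | ⟨rfl, heq⟩
    · exact h.not_prefers_stable hμ m hm
    · exact h.stable_ne_of_rejected hf hlt hμ heq

theorem exists_rejections_ssubset [Finite M] (hMW : Nonempty (M ≃ W))
    [∀ m, IsStrictTotalOrder W (prefM m)] [∀ w, IsStrictTotalOrder M (prefW w)]
    (hf : ¬ Function.Injective f) :
    ∃ g, IsProposalState prefM prefW g ∧ rejections prefM f ⊂ rejections prefM g := by
  classical
  obtain ⟨e⟩ := hMW
  have : Finite W := Finite.of_equiv M e
  have : ∀ m, IsWellFounded W (prefM m) := fun m => ⟨Finite.wellFounded_of_trans_of_irrefl _⟩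
  obtain ⟨m₁, m₂, heq, hlt⟩ : ∃ m₁ m₂, f m₁ = f m₂ ∧ prefW (f m₂) m₁ m₂ := by
    obtain ⟨a, b, hab, hne⟩ := Function.not_injective_iff.1 hf
    rcases trichotomous_of (prefW (f b)) a b with hlt | heq | hgt
    · exact ⟨a, b, hab, hlt⟩
    · exact absurd heq hne
    · exact ⟨b, a, hab.symm, hab ▸ hgt⟩
  obtain ⟨w, hw⟩ : ∃ w, w ∉ Set.range f := by
    by_contra! hsurj
    exact hf ((Finite.injective_iff_surjective_of_equiv e).2 hsurj)
  obtain ⟨w', hw', hnext⟩ := exists_next_choice ⟨w, h.prefers_of_notMem_range (m := m₂) hw⟩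
  exact ⟨_, h.update_of_rejected heq hlt hnext, rejections_ssubset_update hw'⟩

end IsProposalState

variable [Finite M] (hMW : Nonempty (M ≃ W))
  [∀ m, IsStrictTotalOrder W (prefM m)] [∀ w, IsStrictTotalOrder M (prefW w)]
include hMW

theorem exists_equiv_isProposalState : ∃ μ : M ≃ W, IsProposalState prefM prefW μ := by
  obtain ⟨e⟩ := hMW
  have : Finite W := Finite.of_equiv M e
  have hfav : ∀ m, ∃ w, ∀ v, ¬ prefM m v w := fun m => by
    obtain ⟨w, -, hw⟩ := (Finite.wellFounded_of_trans_of_irrefl (prefM m)).has_min Set.univ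
      ⟨e m, Set.mem_univ _⟩
    exact ⟨w, fun v => hw v (Set.mem_univ v)⟩
  choose fav hfav using hfav
  obtain ⟨f, hf, hmax⟩ := Set.Finite.exists_maximalFor (rejections prefM)
    {f | IsProposalState prefM prefW f} (Set.toFinite _) ⟨fav, .of_favourites hfav⟩
  have hinj : Function.Injective f := by
    by_contra hinj
    obtain ⟨g, hg, hfg⟩ := IsProposalState.exists_rejections_ssubset hf ⟨e⟩ hinj
    exact hfg.not_subset (hmax hg hfg.subset)
  exact ⟨Equiv.ofBijective f ⟨hinj, (Finite.injective_iff_surjective_of_equiv e).1 hinj⟩, hf⟩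

theorem existsUnique_menOptimal_stableMatching :
    ∃! μM : M ≃ W, IsStableMatching prefM prefW μM ∧
      (∀ μ : M ≃ W, IsStableMatching prefM prefW μ → ∀ m, μM m = μ m ∨ prefM m (μM m) (μ m)) ∧
      (∀ μ : M ≃ W, IsStableMatching prefM prefW μ →
        ∀ w, μ.symm w = μM.symm w ∨ prefW w (μ.symm w) (μM.symm w)) := by
  obtain ⟨μM, hμM⟩ := exists_equiv_isProposalState (prefM := prefM) (prefW := prefW) hMW
  refine ⟨μM, ⟨hμM.isStableMatching, fun μ hμ => hμM.eq_or_prefers_stable hμ,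
    fun μ hμ => hμ.symm_eq_or_prefers (hμM.eq_or_prefers_stable hμ)⟩, ?_⟩
  rintro ν ⟨hν, hνopt, -⟩
  ext m
  exact (hνopt μM hμM.isStableMatching m).resolve_right (hμM.not_prefers_stable hν m)

end

theorem exists_unique_optimal_stable_general {M W : Type*} [Finite M] (hMW : Nonempty (M ≃ W))
    (prefM : M → W → W → Prop) (prefW : W → M → M → Prop)
    (hM : ∀ m, IsStrictTotalOrder W (prefM m)) (hW : ∀ w, IsStrictTotalOrder M (prefW w)) :
    (∃! μM : M ≃ W, IsStableMatching prefM prefW μM ∧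
      (∀ μ : M ≃ W, IsStableMatching prefM prefW μ → ∀ m, μM m = μ m ∨ prefM m (μM m) (μ m)) ∧
      (∀ μ : M ≃ W, IsStableMatching prefM prefW μ →
        ∀ w, μ.symm w = μM.symm w ∨ prefW w (μ.symm w) (μM.symm w))) ∧
    (∃! μW : M ≃ W, IsStableMatching prefM prefW μW ∧
      (∀ μ : M ≃ W, IsStableMatching prefM prefW μ →
        ∀ w, μW.symm w = μ.symm w ∨ prefW w (μW.symm w) (μ.symm w)) ∧
      (∀ μ : M ≃ W, IsStableMatching prefM prefW μ → ∀ m, μ m = μW m ∨ prefM m (μ m) (μW m))) := by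
  refine ⟨existsUnique_menOptimal_stableMatching hMW, ?_⟩
  have : Finite W := hMW.elim (Finite.of_equiv M)
  have hwomen := existsUnique_menOptimal_stableMatching (prefM := prefW) (prefW := prefM)
    (hMW.map Equiv.symm)
  simpa only [Equiv.symm_bijective.existsUnique_iff (α := M ≃ W),
    Equiv.symm_bijective.surjective.forall (α := M ≃ W), isStableMatching_symm,
    Equiv.symm_symm] using hwomen

/-- For every complete preference profile there is a unique stable matching `μM` which is
men-optimal and women-pessimal, and a unique stable matching `μW` which is women-optimal
and men-pessimal. -/
theorem exists_unique_optimal_stable (N : ℕ) (hN : 1 ≤ N)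
    (prefM prefW : Fin N → Fin N → Fin N → Prop)
    (hM : ∀ m, IsStrictTotalOrder (Fin N) (prefM m))
    (hW : ∀ w, IsStrictTotalOrder (Fin N) (prefW w)) :
    (∃! μM : Fin N ≃ Fin N, MatchStable prefM prefW μM ∧
      (∀ μ : Fin N ≃ Fin N, MatchStable prefM prefW μ →
        ∀ m, μM m = μ m ∨ prefM m (μM m) (μ m)) ∧
      (∀ μ : Fin N ≃ Fin N, MatchStable prefM prefW μ →
        ∀ w, μ.symm w = μM.symm w ∨ prefW w (μ.symm w) (μM.symm w))) ∧
    (∃! μW : Fin N ≃ Fin N, MatchStable prefM prefW μW ∧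
      (∀ μ : Fin N ≃ Fin N, MatchStable prefM prefW μ →
        ∀ w, μW.symm w = μ.symm w ∨ prefW w (μW.symm w) (μ.symm w)) ∧
      (∀ μ : Fin N ≃ Fin N, MatchStable prefM prefW μ →
        ∀ m, μ m = μW m ∨ prefM m (μ m) (μW m))) :=
  exists_unique_optimal_stable_general ⟨Equiv.refl _⟩ prefM prefW hM hW
end

section
/- Lattice join of stable matchings: fix a complete preference profile and two stable matchings μ₁ and μ₂. Define ν : M → W by letting ν(m) be whichever of μ₁(m), μ₂(m) man m prefers (ν(m) = μ₁(m) if μ₁(m) = μ₂(m) or μ₁(m) ≻ₘ μ₂(m), else ν(m) = μ₂(m)). Then ν is a bijection from M to W, and the matching ν is stable. -/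
attribute [local instance] Classical.propDecidable

/-!
Suppose distinct men `m` and `m'` both receive `w` in the join, `m` as `μ₁ m` and `m'` as `μ₂ m'`.
Then `m` prefers `w` to `μ₂ m` and `m'` prefers `w` to `μ₁ m'`, so `w` and whichever of the two she
prefers block the matching that gives her the other. Hence the join is injective, and by finiteness
bijective. For stability, a pair blocking the join blocks whichever `μᵢ` gives the woman her partner
in the join, because every man does at least as well in the join as in `μᵢ`.
-/

namespace StableMatching

variable {M W : Type*} {prefM : M → W → W → Prop} {prefW : W → M → M → Prop}
  {μ μ₁ μ₂ e : M ≃ W} {m m' : M} {w : W}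

/-- The pair `(m, w)` blocks the matching `μ`; `prefM m w w'` says that `m` prefers `w` to `w'`,
and `prefW w m m'` that `w` prefers `m` to `m'`. -/
def Blocks (prefM : M → W → W → Prop) (prefW : W → M → M → Prop) (μ : M ≃ W) (m : M) (w : W) :
    Prop :=
  prefM m w (μ m) ∧ prefW w m (μ.symm w)

/-- Stability of a matching between arbitrary types of men and women; for `M = W = Fin N` it unfolds
to `MatchStable`. -/
def IsStable (prefM : M → W → W → Prop) (prefW : W → M → M → Prop) (μ : M ≃ W) : Prop :=
  ¬ ∃ m w, Blocks prefM prefW μ m w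

/-- The men's join of two assignments: each man receives whichever of `f m` and `g m` he prefers.
It is a bare function, since the join of two matchings need not be a matching in general. -/
noncomputable def menJoin (prefM : M → W → W → Prop) (f g : M → W) (m : M) : W :=
  if f m = g m ∨ prefM m (f m) (g m) then f m else g m

theorem menJoin_eq_or (prefM : M → W → W → Prop) (f g : M → W) (m : M) :
    menJoin prefM f g m = f m ∨ menJoin prefM f g m = g m :=
  ite_eq_or_eq _ _ _

theorem menJoin_eq_left_or_pref (prefM : M → W → W → Prop) [∀ m, Std.Trichotomous (prefM m)]
    (f g : M → W) (m : M) :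
    menJoin prefM f g m = f m ∨ prefM m (menJoin prefM f g m) (f m) := by
  unfold menJoin
  split_ifs with h
  · exact .inl rfl
  · obtain ⟨hne, hnot⟩ := not_or.mp h
    exact .inr (((trichotomous_of (prefM m) (f m) (g m)).resolve_left hnot).resolve_left hne)

theorem menJoin_eq_right_or_pref (prefM : M → W → W → Prop) (f g : M → W) (m : M) :
    menJoin prefM f g m = g m ∨ prefM m (menJoin prefM f g m) (g m) := by
  unfold menJoin
  split_ifs with h
  · exact h
  · exact .inl rfl

theorem IsStable.eq_of_pref_of_pref [∀ w, Std.Trichotomous (prefW w)]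
    (h₁ : IsStable prefM prefW μ₁) (h₂ : IsStable prefM prefW μ₂)
    (hm : μ₁ m = w) (hm' : μ₂ m' = w) (hpref : prefM m w (μ₂ m)) (hpref' : prefM m' w (μ₁ m')) :
    m = m' := by
  have hsymm : μ₁.symm w = m := μ₁.symm_apply_eq.mpr hm.symm
  have hsymm' : μ₂.symm w = m' := μ₂.symm_apply_eq.mpr hm'.symm
  rcases trichotomous_of (prefW w) m m' with hw | heq | hw
  · exact absurd ⟨m, w, hpref, hsymm'.symm ▸ hw⟩ h₂
  · exact heq
  · exact absurd ⟨m', w, hpref', hsymm.symm ▸ hw⟩ h₁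

theorem IsStable.eq_of_menJoin_eq [∀ m, Std.Trichotomous (prefM m)]
    [∀ w, Std.Trichotomous (prefW w)]
    (h₁ : IsStable prefM prefW μ₁) (h₂ : IsStable prefM prefW μ₂)
    (hm : menJoin prefM μ₁ μ₂ m = μ₁ m) (hm' : menJoin prefM μ₁ μ₂ m' = μ₂ m')
    (h : menJoin prefM μ₁ μ₂ m = menJoin prefM μ₁ μ₂ m') : m = m' := by
  rcases menJoin_eq_right_or_pref prefM μ₁ μ₂ m with heq | hpref
  · exact μ₂.injective (heq.symm.trans (h.trans hm'))
  rcases menJoin_eq_left_or_pref prefM μ₁ μ₂ m' with heq' | hpref'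
  · exact μ₁.injective (hm.symm.trans (h.trans heq'))
  exact h₁.eq_of_pref_of_pref h₂ hm.symm (hm'.symm.trans h.symm) hpref (h ▸ hpref')

theorem IsStable.injective_menJoin [∀ m, Std.Trichotomous (prefM m)]
    [∀ w, Std.Trichotomous (prefW w)]
    (h₁ : IsStable prefM prefW μ₁) (h₂ : IsStable prefM prefW μ₂) :
    Function.Injective (menJoin prefM μ₁ μ₂) := by
  intro m m' h
  rcases menJoin_eq_or prefM μ₁ μ₂ m with hm | hm <;>
    rcases menJoin_eq_or prefM μ₁ μ₂ m' with hm' | hm'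
  · exact μ₁.injective (hm.symm.trans (h.trans hm'))
  · exact h₁.eq_of_menJoin_eq h₂ hm hm' h
  · exact (h₁.eq_of_menJoin_eq h₂ hm' hm h.symm).symm
  · exact μ₂.injective (hm.symm.trans (h.trans hm'))

theorem IsStable.bijective_menJoin [Finite M] [∀ m, Std.Trichotomous (prefM m)]
    [∀ w, Std.Trichotomous (prefW w)]
    (h₁ : IsStable prefM prefW μ₁) (h₂ : IsStable prefM prefW μ₂) :
    Function.Bijective (menJoin prefM μ₁ μ₂) :=
  have hinj := h₁.injective_menJoin h₂
  ⟨hinj, (Finite.injective_iff_surjective_of_equiv μ₁).mp hinj⟩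

theorem Blocks.of_eq_or_pref [IsTrans W (prefM m)] (h : Blocks prefM prefW e m w)
    (hm : e m = μ m ∨ prefM m (e m) (μ m)) (hw : e (e.symm w) = μ (e.symm w)) :
    Blocks prefM prefW μ m w := by
  have hsymm : μ.symm w = e.symm w := by rw [μ.symm_apply_eq, ← hw, e.apply_symm_apply]
  exact ⟨hm.elim (fun heq => heq ▸ h.1) (_root_.trans h.1), hsymm ▸ h.2⟩

theorem IsStable.of_eq_menJoin [∀ m, IsTrans W (prefM m)] [∀ m, Std.Trichotomous (prefM m)]
    (h₁ : IsStable prefM prefW μ₁) (h₂ : IsStable prefM prefW μ₂)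
    (he : ∀ m, e m = menJoin prefM μ₁ μ₂ m) : IsStable prefM prefW e := by
  rintro ⟨m, w, hblocks⟩
  rcases menJoin_eq_or prefM μ₁ μ₂ (e.symm w) with hw | hw <;> rw [← he] at hw
  · exact h₁ ⟨m, w, hblocks.of_eq_or_pref (he m ▸ menJoin_eq_left_or_pref prefM μ₁ μ₂ m) hw⟩
  · exact h₂ ⟨m, w, hblocks.of_eq_or_pref (he m ▸ menJoin_eq_right_or_pref prefM μ₁ μ₂ m) hw⟩

end StableMatching

open StableMatching in
theorem join_of_stable_is_stable_general {M W : Type*} [Finite M]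
    (prefM : M → W → W → Prop) (prefW : W → M → M → Prop)
    [∀ m, IsTrans W (prefM m)] [∀ m, Std.Trichotomous (prefM m)]
    [∀ w, Std.Trichotomous (prefW w)] (μ₁ μ₂ : M ≃ W)
    (h₁ : IsStable prefM prefW μ₁) (h₂ : IsStable prefM prefW μ₂) (ν : M → W)
    (hν : ∀ m, ν m = if μ₁ m = μ₂ m ∨ prefM m (μ₁ m) (μ₂ m) then μ₁ m else μ₂ m) :
    Function.Bijective ν ∧ ∀ e : M ≃ W, (∀ m, e m = ν m) → IsStable prefM prefW e := by
  obtain rfl : ν = menJoin prefM μ₁ μ₂ := funext hν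
  exact ⟨h₁.bijective_menJoin h₂, fun _ he => h₁.of_eq_menJoin h₂ he⟩

/-- Lattice join of two stable matchings: giving each man whichever of his two partners he
prefers yields a bijection, and the resulting matching is stable. -/
theorem join_of_stable_is_stable (N : ℕ) (hN : 1 ≤ N)
    (prefM prefW : Fin N → Fin N → Fin N → Prop)
    (hM : ∀ m, IsStrictTotalOrder (Fin N) (prefM m))
    (hW : ∀ w, IsStrictTotalOrder (Fin N) (prefW w))
    (μ₁ μ₂ : Fin N ≃ Fin N)
    (h₁ : MatchStable prefM prefW μ₁) (h₂ : MatchStable prefM prefW μ₂)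
    (ν : Fin N → Fin N)
    (hν : ∀ m, ν m = if μ₁ m = μ₂ m ∨ prefM m (μ₁ m) (μ₂ m) then μ₁ m else μ₂ m) :
    Function.Bijective ν ∧
      ∀ e : Fin N ≃ Fin N, (∀ m, e m = ν m) → MatchStable prefM prefW e := by
  exact join_of_stable_is_stable_general prefM prefW μ₁ μ₂ h₁ h₂ ν fun m => by convert hν m
end
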